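/- arXiv:2010.09649 — 4 statements merged into one kernel-verified Lean document; each statement's English description precedes it below -/
import Mathlib

section
/- There exists an absolute constant c > 0 with the following property. For every d ≥ 1, every matrix A ∈ ℝ^{d×d}, every δ ∈ (0, 1/2], every ε ∈ (0, 1), and every integer ℓ ≥ c·log(1/δ)/ε², the Hutchinson estimator H_ℓ(A) satisfies |H_ℓ(A) − tr(A)| ≤ ε·‖A‖_F with probability at least 1 − δ. -/
open MeasureTheory Matrix

/-- The Frobenius norm of a real matrix. -/
noncomputable def frobNorm {m n : ℕ} (M : Matrix (Fin m) (Fin n) ℝ) : ℝ :=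
  Real.sqrt (∑ i, ∑ j, (M i j) ^ 2)

/-- The Rademacher distribution on `ℝ`: uniform on `{-1, +1}`. -/
noncomputable def rademacher : Measure ℝ :=
  ((1 : ENNReal) / 2) • Measure.dirac (-1) + ((1 : ENNReal) / 2) • Measure.dirac 1

instance : IsProbabilityMeasure rademacher := by
  constructor
  simp [rademacher]
  exact ENNReal.inv_two_add_inv_two

/-- The law of a `d × n` random matrix with i.i.d. Rademacher entries
(as a product measure on `Fin d → Fin n → ℝ`). -/
noncomputable def radMeasure (d n : ℕ) : Measure (Fin d → Fin n → ℝ) :=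
  Measure.pi fun _ => Measure.pi fun _ => rademacher

/-- Hutchinson's estimator with `n` queries, evaluated at the query matrix `g`. -/
noncomputable def hutch {d n : ℕ} (A : Matrix (Fin d) (Fin d) ℝ)
    (g : Fin d → Fin n → ℝ) : ℝ :=
  (1 / (n : ℝ)) * ((Matrix.of g)ᵀ * A * Matrix.of g).trace

lemma lint_cons {α : Type} [MeasurableSpace α] (μ : Measure α) [IsProbabilityMeasure μ] (n : ℕ)
    (f : (Fin (n + 1) → α) → ENNReal) (hf : Measurable f) :
    ∫⁻ g, f g ∂(Measure.pi fun _ : Fin (n + 1) => μ) =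
      ∫⁻ y, ∫⁻ x, f (Fin.cons x y) ∂μ ∂(Measure.pi fun _ : Fin n => μ) := by
  have h := (measurePreserving_piFinSuccAbove (fun _ : Fin (n + 1) => μ) 0).symm
  rw [← h.lintegral_comp hf, lintegral_prod_symm']
  · simp only [MeasurableEquiv.piFinSuccAbove_symm_apply, Fin.insertNthEquiv,
      Equiv.coe_fn_mk, Fin.insertNth_zero']
  · exact hf.comp h.measurable

lemma rad_one (β c : ℝ) :
    ∫⁻ x, ENNReal.ofReal (Real.exp (β * x ^ 2 + c * x)) ∂rademacher ≤
      ENNReal.ofReal (Real.exp (β + c ^ 2 / 2)) := by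
  have hm : Measurable fun x : ℝ => ENNReal.ofReal (Real.exp (β * x ^ 2 + c * x)) := by fun_prop
  have h2 : (1 : ENNReal) / 2 = ENNReal.ofReal (1 / 2) := by
    rw [ENNReal.ofReal_div_of_pos (by norm_num)]; simp
  rw [rademacher, lintegral_add_measure, lintegral_smul_measure, lintegral_smul_measure,
    lintegral_dirac' _ hm, lintegral_dirac' _ hm, h2, smul_eq_mul, smul_eq_mul,
    ← ENNReal.ofReal_mul (by norm_num), ← ENNReal.ofReal_mul (by norm_num),
    ← ENNReal.ofReal_add (by positivity) (by positivity)]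
  apply ENNReal.ofReal_le_ofReal
  have := Real.cosh_le_exp_half_sq c
  rw [Real.cosh_eq] at this
  have e1 : β * (-1) ^ 2 + c * (-1) = β + -c := by ring
  have e2 : β * 1 ^ 2 + c * 1 = β + c := by ring
  rw [e1, e2, Real.exp_add, Real.exp_add, Real.exp_add]
  nlinarith [Real.exp_pos β]

lemma rad_row (β : ℝ) (n : ℕ) (c : Fin n → ℝ) :
    ∫⁻ x, ENNReal.ofReal (Real.exp (∑ k, (β * x k ^ 2 + c k * x k)))
        ∂(Measure.pi fun _ : Fin n => rademacher) ≤
      ENNReal.ofReal (Real.exp (∑ k, (β + c k ^ 2 / 2))) := by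
  induction n with
  | zero => simp
  | succ n ih =>
    rw [lint_cons _ _ _ (by fun_prop)]
    simp only [Fin.sum_univ_succ, Fin.cons_zero, Fin.cons_succ, Real.exp_add (β * _ ^ 2 + _)]
    rw [Real.exp_add (β + _)]
    simp only [ENNReal.ofReal_mul (Real.exp_pos _).le]
    calc _ = ∫⁻ y : Fin n → ℝ, (∫⁻ x, ENNReal.ofReal (Real.exp (β * x ^ 2 + c 0 * x)) ∂rademacher) *
          ENNReal.ofReal (Real.exp (∑ k, (β * y k ^ 2 + c k.succ * y k)))
          ∂(Measure.pi fun _ : Fin n => rademacher) := by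
          refine lintegral_congr fun y => ?_
          rw [lintegral_mul_const _ (by fun_prop)]
      _ ≤ _ := by
          rw [lintegral_const_mul _ (by fun_prop)]
          exact mul_le_mul' (rad_one _ _) (ih _)

/-- The quadratic form summed over the queries. -/
noncomputable def qf {d n : ℕ} (B : Fin d → Fin d → ℝ) (g : Fin d → Fin n → ℝ) : ℝ :=
  ∑ k, ∑ i, ∑ j, B i j * g i k * g j k

lemma qf_meas {d n : ℕ} (B : Fin d → Fin d → ℝ) :
    Measurable fun g : Fin d → Fin n → ℝ => qf B g := by
  unfold qf; fun_prop

lemma qf_cons {d n : ℕ} (B : Fin (d + 1) → Fin (d + 1) → ℝ) (x : Fin n → ℝ)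
    (y : Fin d → Fin n → ℝ) :
    qf B (Fin.cons x y : Fin (d + 1) → Fin n → ℝ) =
      (∑ k, (B 0 0 * x k ^ 2 + (∑ j, (B 0 j.succ + B j.succ 0) * y j k) * x k)) +
      qf (fun i j => B i.succ j.succ) y := by
  unfold qf
  rw [← Finset.sum_add_distrib]
  refine Finset.sum_congr rfl fun k _ => ?_
  simp only [Fin.sum_univ_succ, Fin.cons_zero, Fin.cons_succ, Finset.sum_add_distrib, add_mul,
    Finset.sum_mul]
  have e1 : ∀ j : Fin d, B 0 j.succ * x k * y j k = B 0 j.succ * y j k * x k := fun j => by ring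
  simp only [e1]
  ring

lemma qf_rank {d n : ℕ} (B : Fin d → Fin d → ℝ) (w : Fin d → ℝ) (y : Fin d → Fin n → ℝ) :
    (∑ k, (∑ j, w j * y j k) ^ 2 / 2) + qf B y = qf (fun i j => B i j + w i * w j / 2) y := by
  unfold qf
  rw [← Finset.sum_add_distrib]
  refine Finset.sum_congr rfl fun k _ => ?_
  rw [sq, Finset.sum_mul_sum, Finset.sum_div, ← Finset.sum_add_distrib]
  refine Finset.sum_congr rfl fun i _ => ?_
  rw [Finset.sum_div, ← Finset.sum_add_distrib]
  refine Finset.sum_congr rfl fun j _ => ?_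
  ring

lemma rank_frob {d : ℕ} (B : Fin d → Fin d → ℝ) (w : Fin d → ℝ)
    (hB : ∑ i, ∑ j, B i j ^ 2 ≤ 1 / 16) :
    ∑ i, ∑ j, (B i j + w i * w j / 2) ^ 2 ≤
      ∑ i, ∑ j, B i j ^ 2 + (∑ i, w i ^ 2) / 4 + (∑ i, w i ^ 2) ^ 2 / 4 := by
  have hW : 0 ≤ ∑ i, w i ^ 2 := Finset.sum_nonneg fun i _ => sq_nonneg _
  have hww : ∑ i, ∑ j, (w i * w j) ^ 2 = (∑ i, w i ^ 2) ^ 2 := by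
    rw [sq (∑ i, w i ^ 2), Finset.sum_mul_sum]
    simp only [mul_pow]
  have hcs : (∑ i, ∑ j, B i j * (w i * w j)) ^ 2 ≤
      (∑ i, ∑ j, B i j ^ 2) * (∑ i, ∑ j, (w i * w j) ^ 2) := by
    have := Finset.sum_mul_sq_le_sq_mul_sq (Finset.univ : Finset (Fin d × Fin d))
      (fun p => B p.1 p.2) (fun p => w p.1 * w p.2)
    simpa only [Fintype.sum_prod_type] using this
  have hle : ∑ i, ∑ j, B i j * (w i * w j) ≤ (∑ i, w i ^ 2) / 4 := by
    refine le_of_abs_le (abs_le_of_sq_le_sq ?_ (by positivity))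
    rw [hww] at hcs
    nlinarith [sq_nonneg (∑ i, w i ^ 2)]
  have hexp : ∑ i, ∑ j, (B i j + w i * w j / 2) ^ 2 = ∑ i, ∑ j, B i j ^ 2 +
      ∑ i, ∑ j, B i j * (w i * w j) + (∑ i, ∑ j, (w i * w j) ^ 2) / 4 := by
    simp only [Finset.sum_div, ← Finset.sum_add_distrib]
    refine Finset.sum_congr rfl fun i _ => Finset.sum_congr rfl fun j _ => ?_
    ring
  rw [hexp, hww]
  linarith

lemma mgf_main (n d : ℕ) (B : Fin d → Fin d → ℝ) (hB : ∑ i, ∑ j, B i j ^ 2 ≤ 1 / 16) :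
    ∫⁻ g, ENNReal.ofReal (Real.exp (qf B g)) ∂(radMeasure d n) ≤
      ENNReal.ofReal (Real.exp (n * (∑ i, B i i + 4 * ∑ i, ∑ j, B i j ^ 2))) := by
  induction d with
  | zero => simp [qf, radMeasure]
  | succ d ih =>
    have hm := qf_meas (n := n) B
    rw [radMeasure, lint_cons _ _ _ (by fun_prop)]
    set w : Fin d → ℝ := fun j => B 0 j.succ + B j.succ 0 with hw
    set B' : Fin d → Fin d → ℝ := fun i j => B i.succ j.succ with hB'
    set s : ℝ := ∑ j : Fin d, B 0 j.succ ^ 2 + ∑ j : Fin d, B j.succ 0 ^ 2 with hs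
    have hfr : ∑ i, ∑ j, B i j ^ 2 = B 0 0 ^ 2 + s + ∑ i, ∑ j, B' i j ^ 2 := by
      simp only [Fin.sum_univ_succ, Finset.sum_add_distrib, hs, hB']
      ring
    have hs0 : 0 ≤ s := by positivity
    have hF0 : 0 ≤ ∑ i, ∑ j, B' i j ^ 2 := by positivity
    have hw0 : 0 ≤ ∑ i, w i ^ 2 := by positivity
    have hws : ∑ i, w i ^ 2 ≤ 2 * s := by
      rw [hs, ← Finset.sum_add_distrib, Finset.mul_sum]
      refine Finset.sum_le_sum fun j _ => ?_
      simp only [hw]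
      nlinarith [sq_nonneg (B 0 j.succ - B j.succ 0)]
    have hb0 := sq_nonneg (B 0 0)
    have hr := rank_frob B' w (by linarith)
    have hs16 : s ≤ 1 / 16 := by linarith
    have hr2 : ∑ i, ∑ j, (B' i j + w i * w j / 2) ^ 2 ≤ ∑ i, ∑ j, B' i j ^ 2 + 9 / 16 * s := by
      nlinarith
    have hih := ih (fun i j => B' i j + w i * w j / 2) (by linarith)
    have hqm := qf_meas (n := n) (fun i j => B' i j + w i * w j / 2)
    calc _ ≤ ∫⁻ y : Fin d → Fin n → ℝ, ENNReal.ofReal (Real.exp (n * B 0 0)) *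
            ENNReal.ofReal (Real.exp (qf (fun i j => B' i j + w i * w j / 2) y))
            ∂(radMeasure d n) := by
          refine lintegral_mono fun y => ?_
          simp only [qf_cons, Real.exp_add, ENNReal.ofReal_mul (Real.exp_pos _).le]
          rw [lintegral_mul_const _ (by fun_prop)]
          refine (mul_le_mul_left (rad_row _ _ _) _).trans (le_of_eq ?_)
          rw [← ENNReal.ofReal_mul (Real.exp_pos _).le, ← ENNReal.ofReal_mul (Real.exp_pos _).le,
            ← Real.exp_add, ← Real.exp_add, ← qf_rank, Finset.sum_add_distrib]
          simp [hw, hB', add_assoc]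
      _ ≤ _ := by
          rw [lintegral_const_mul _ (by fun_prop)]
          refine (mul_le_mul_right hih _).trans ?_
          rw [← ENNReal.ofReal_mul (Real.exp_pos _).le, ← Real.exp_add]
          apply ENNReal.ofReal_le_ofReal
          apply Real.exp_le_exp.2
          rw [← mul_add]
          apply mul_le_mul_of_nonneg_left _ (Nat.cast_nonneg n)
          have ht : ∑ i, (B' i i + w i * w i / 2) = ∑ i, B' i i + (∑ i, w i ^ 2) / 2 := by
            rw [Finset.sum_add_distrib, Finset.sum_div]
            simp only [sq]
          rw [hfr, ht, Fin.sum_univ_succ]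
          linarith

lemma tail_bound (n d : ℕ) (A : Fin d → Fin d → ℝ) (F ε : ℝ) (hF : 0 < F)
    (hFA : ∑ i, ∑ j, A i j ^ 2 = F ^ 2) (hε : 0 < ε) (hε1 : ε < 1) :
    radMeasure d n {g | n * (∑ i, A i i) + n * ε * F ≤ qf A g} ≤
      ENNReal.ofReal (Real.exp (-(n * ε ^ 2 / 16))) := by
  set t : ℝ := ε / 8 / F with ht
  have ht0 : 0 < t := by positivity
  have htF : t * F = ε / 8 := by rw [ht]; field_simp
  have hsq : ∑ i, ∑ j, (t * A i j) ^ 2 = (ε / 8) ^ 2 := by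
    simp only [mul_pow, ← Finset.mul_sum]
    rw [hFA, ← mul_pow, htF]
  have hM := mgf_main n d (fun i j => t * A i j) (by rw [hsq]; nlinarith)
  rw [hsq] at hM
  have hq : ∀ g : Fin d → Fin n → ℝ, qf (fun i j => t * A i j) g = t * qf A g := by
    intro g
    simp only [qf, Finset.mul_sum, mul_assoc]
  have hqm := qf_meas (n := n) (fun i j => t * A i j)
  set a : ℝ := t * (n * (∑ i, A i i) + n * ε * F) with ha
  have hmk := meas_ge_le_lintegral_div (μ := radMeasure d n)
    (f := fun g => ENNReal.ofReal (Real.exp (qf (fun i j => t * A i j) g)))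
    (by fun_prop) (ε := ENNReal.ofReal (Real.exp a))
    (by simp [Real.exp_pos]) (by simp)
  refine (measure_mono ?_).trans (hmk.trans ?_)
  · intro g hg
    simp only [Set.mem_ofPred_eq] at hg ⊢
    apply ENNReal.ofReal_le_ofReal
    apply Real.exp_le_exp.2
    rw [hq]
    exact mul_le_mul_of_nonneg_left hg ht0.le
  · refine (ENNReal.div_le_div_right hM _).trans (le_of_eq ?_)
    rw [← ENNReal.ofReal_div_of_pos (Real.exp_pos _), ← Real.exp_sub]
    congr 2
    rw [ha, ← Finset.mul_sum]
    linear_combination (-(n : ℝ) * ε) * htF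

lemma hutch_eq {d n : ℕ} (A : Matrix (Fin d) (Fin d) ℝ) (g : Fin d → Fin n → ℝ) :
    hutch A g = 1 / (n : ℝ) * qf A g := by
  unfold hutch qf
  congr 1
  simp only [Matrix.trace, Matrix.diag, Matrix.mul_apply, Matrix.transpose_apply, Matrix.of_apply,
    Finset.sum_mul]
  refine Finset.sum_congr rfl fun k _ => ?_
  rw [Finset.sum_comm]
  refine Finset.sum_congr rfl fun i _ => Finset.sum_congr rfl fun j _ => ?_
  ring

instance radMeasure_prob (d n : ℕ) : IsProbabilityMeasure (radMeasure d n) := by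
  unfold radMeasure; infer_instance

theorem stmt5 : ∃ c : ℝ, 0 < c ∧
    ∀ (d : ℕ) (A : Matrix (Fin d) (Fin d) ℝ) (δ ε : ℝ) (ℓ : ℕ),
      1 ≤ d → 0 < δ → δ ≤ 1 / 2 → 0 < ε → ε < 1 →
      c * Real.log (1 / δ) / ε ^ 2 ≤ (ℓ : ℝ) →
      ENNReal.ofReal (1 - δ) ≤
        radMeasure d ℓ {g | |hutch A g - A.trace| ≤ ε * frobNorm A} := by
  refine ⟨32, by norm_num, ?_⟩
  intro d A δ ε n _ hδ hδ2 hε hε1 hn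
  have hlog : 0 < Real.log (1 / δ) := Real.log_pos (by rw [lt_div_iff₀ hδ]; linarith)
  have hn0 : (0 : ℝ) < n := lt_of_lt_of_le (by positivity) hn
  rw [div_le_iff₀ (by positivity)] at hn
  have hsum : 0 ≤ ∑ i, ∑ j, A i j ^ 2 := by positivity
  have hFsq : ∑ i, ∑ j, A i j ^ 2 = frobNorm A ^ 2 := by
    rw [frobNorm, Real.sq_sqrt hsum]
  have hF0 : 0 ≤ frobNorm A := Real.sqrt_nonneg _
  rcases hF0.eq_or_lt with hF | hF
  · have hA : A = 0 := by
      rw [← hF] at hFsq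
      ext i j
      have h1 := (Finset.sum_eq_zero_iff_of_nonneg (fun i _ => by positivity)).1
        (hFsq.trans (by norm_num)) i (Finset.mem_univ i)
      have h2 := (Finset.sum_eq_zero_iff_of_nonneg (fun j _ => by positivity)).1
        h1 j (Finset.mem_univ j)
      simpa using h2
    have hu : {g : Fin d → Fin n → ℝ | |hutch A g - A.trace| ≤ ε * frobNorm A} = Set.univ := by
      ext g
      simp [hutch, hA, frobNorm]
    rw [hu, measure_univ]
    exact ENNReal.ofReal_le_one.2 (by linarith)
  · have htr : A.trace = ∑ i, A i i := rfl
    have h1 := tail_bound n d A (frobNorm A) ε hF hFsq hε hε1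
    have h2 := tail_bound n d (fun i j => - A i j) (frobNorm A) ε hF
      (by simpa using hFsq) hε hε1
    have hqn : ∀ g : Fin d → Fin n → ℝ, qf (fun i j => - A i j) g = - qf A g := by
      intro g; simp [qf]
    have hexp : Real.exp (-(n * ε ^ 2 / 16)) ≤ δ ^ 2 := by
      have : δ ^ 2 = Real.exp (-(2 * Real.log (1 / δ))) := by
        rw [one_div, Real.log_inv, mul_neg, neg_neg, two_mul, Real.exp_add, Real.exp_log hδ, sq]
      rw [this]
      apply Real.exp_le_exp.2
      linarith
    set S := {g : Fin d → Fin n → ℝ | |hutch A g - A.trace| ≤ ε * frobNorm A} with hS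
    have hqm := qf_meas (n := n) A
    have hmS : MeasurableSet S := by
      simp only [hS, hutch_eq]
      exact measurableSet_le (by fun_prop) (by fun_prop)
    have hc : radMeasure d n Sᶜ ≤ ENNReal.ofReal δ := by
      refine (measure_mono (t := {g | n * (∑ i, A i i) + n * ε * frobNorm A ≤ qf A g} ∪
        {g | n * (∑ i, - A i i) + n * ε * frobNorm A ≤ qf (fun i j => - A i j) g}) ?_).trans
        ((measure_union_le _ _).trans ((add_le_add h1 h2).trans ?_))
      · intro g hg
        simp only [hS, Set.mem_compl_iff, Set.mem_ofPred_eq, not_le, hutch_eq, htr] at hg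
        simp only [Set.mem_union, Set.mem_ofPred_eq, hqn, Finset.sum_neg_distrib]
        have hnq : (n : ℝ) * (1 / n * qf A g) = qf A g := by field_simp
        rcases lt_abs.1 hg with h | h
        · left
          have := mul_lt_mul_of_pos_left h hn0
          rw [mul_sub, hnq] at this
          linarith
        · right
          have := mul_lt_mul_of_pos_left h hn0
          rw [mul_neg, mul_sub, hnq] at this
          linarith
      · rw [← ENNReal.ofReal_add (Real.exp_pos _).le (Real.exp_pos _).le]
        apply ENNReal.ofReal_le_ofReal
        nlinarith
    have hcompl : radMeasure d n S = 1 - radMeasure d n Sᶜ := by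
      rw [← prob_compl_eq_one_sub hmS.compl, compl_compl]
    rw [hcompl, ENNReal.ofReal_sub _ hδ.le, ENNReal.ofReal_one]
    exact tsub_le_tsub_left hc 1
end

section
/- There exist absolute constants c, C > 0 with the following property. Let A ∈ ℝ^{d×d} be positive semidefinite, let δ ∈ (0, 1/2], and let k, ℓ be integers with k ≥ 1 and ℓ ≥ c·log(1/δ). Let Ã, Δ ∈ ℝ^{d×d} be any matrices such that tr(A) = tr(Ã) + tr(Δ) and such that ‖Δ‖_F ≤ 2‖A − B‖_F for every matrix B ∈ ℝ^{d×d} with rank(B) ≤ k. Then, with probability at least 1 − δ over the random matrix G defining H_ℓ(Δ), the estimator Z = tr(Ã) + H_ℓ(Δ) satisfies |Z − tr(A)| ≤ 2C·√(log(1/δ)/(kℓ))·tr(A). -/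
open MeasureTheory Matrix

/-- The sign attached to a Boolean. -/
def sgB (b : Bool) : ℝ := if b then 1 else -1

theorem sgB_mul_self (b : Bool) : sgB b * sgB b = 1 := by cases b <;> simp [sgB]

/-- quadratic form at a sign vector -/
def quadB {d : ℕ} (Q : Fin d → Fin d → ℝ) (s : Fin d → Bool) : ℝ :=
  ∑ i, ∑ j, Q i j * sgB (s i) * sgB (s j)

theorem exp_add_exp_le (u v p : ℝ) :
    Real.exp (u + v + p) + Real.exp (u + v - p) ≤ 2 * Real.exp (u + (v + p ^ 2 / 2)) := by
  have h := Real.cosh_le_exp_half_sq p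
  rw [Real.cosh_eq] at h
  have e1 : Real.exp (u + v + p) = Real.exp (u + v) * Real.exp p := Real.exp_add _ _
  have e2 : Real.exp (u + v - p) = Real.exp (u + v) * Real.exp (-p) := by
    rw [← Real.exp_add]; ring_nf
  have e3 : Real.exp (u + (v + p ^ 2 / 2)) = Real.exp (u + v) * Real.exp (p ^ 2 / 2) := by
    rw [← Real.exp_add]; ring_nf
  rw [e1, e2, e3]
  nlinarith [Real.exp_pos (u + v)]

theorem quadB_cons {d : ℕ} (Q : Fin (d + 1) → Fin (d + 1) → ℝ) (b : Bool) (s : Fin d → Bool) :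
    quadB Q (Fin.cons b s) = Q 0 0 + quadB (fun i j => Q i.succ j.succ) s +
      sgB b * ∑ j : Fin d, (Q 0 j.succ + Q j.succ 0) * sgB (s j) := by
  simp only [quadB, Fin.sum_univ_succ, Fin.cons_zero, Fin.cons_succ, Finset.sum_add_distrib,
    add_mul, mul_add, Finset.mul_sum]
  have : Q 0 0 * sgB b * sgB b = Q 0 0 := by rw [mul_assoc, sgB_mul_self, mul_one]
  rw [this]
  have h1 : ∀ x : Fin d, Q 0 x.succ * sgB b * sgB (s x) = sgB b * (Q 0 x.succ * sgB (s x)) := by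
    intro x; ring
  have h2 : ∀ x : Fin d, Q x.succ 0 * sgB (s x) * sgB b = sgB b * (Q x.succ 0 * sgB (s x)) := by
    intro x; ring
  simp only [h1, h2]
  ring

theorem quadB_rank_one {d : ℕ} (R : Fin d → Fin d → ℝ) (p : Fin d → ℝ) (s : Fin d → Bool) :
    quadB (fun i j => R i j + p i * p j / 2) s =
      quadB R s + (∑ j, p j * sgB (s j)) ^ 2 / 2 := by
  simp only [quadB, add_mul, Finset.sum_add_distrib, sq, Finset.sum_mul_sum, Finset.sum_div]
  congr 1
  refine Finset.sum_congr rfl fun i _ => Finset.sum_congr rfl fun j _ => ?_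
  ring

theorem mgf_bound : ∀ (d : ℕ) (Q : Fin d → Fin d → ℝ), (∑ i, ∑ j, Q i j ^ 2 ≤ 1 / 64) →
    ∑ s : Fin d → Bool, Real.exp (quadB Q s) ≤
      2 ^ d * Real.exp (∑ i, Q i i + 2 * ∑ i, ∑ j, Q i j ^ 2) := by
  intro d
  induction d with
  | zero => intro Q _; simp [quadB]
  | succ d ih =>
    intro Q hQ
    set R : Fin d → Fin d → ℝ := fun i j => Q i.succ j.succ with hR
    set p : Fin d → ℝ := fun j => Q 0 j.succ + Q j.succ 0 with hp
    set R' : Fin d → Fin d → ℝ := fun i j => R i j + p i * p j / 2 with hR'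
    set F := ∑ i, ∑ j, R i j ^ 2 with hF
    set P := ∑ j, p j ^ 2 with hP
    set S := ∑ j : Fin d, (Q 0 j.succ ^ 2 + Q j.succ 0 ^ 2) with hS
    set X := ∑ i, ∑ j, R i j * (p i * p j) with hX
    have hQsum : ∑ i, ∑ j, Q i j ^ 2 = Q 0 0 ^ 2 + S + F := by
      simp only [Fin.sum_univ_succ, hS, hF, hR, Finset.sum_add_distrib]; ring
    have hQtr : ∑ i, Q i i = Q 0 0 + ∑ i, R i i := by
      simp only [Fin.sum_univ_succ, hR]
    have hPS : P ≤ 2 * S := by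
      rw [hP, hS, Finset.mul_sum]
      refine Finset.sum_le_sum fun j _ => ?_
      simp only [hp]; nlinarith [sq_nonneg (Q 0 j.succ - Q j.succ 0)]
    have hP0 : 0 ≤ P := Finset.sum_nonneg fun _ _ => sq_nonneg _
    have hF0 : 0 ≤ F := Finset.sum_nonneg fun _ _ => Finset.sum_nonneg fun _ _ => sq_nonneg _
    have hPP : ∑ i, ∑ j, (p i * p j) ^ 2 = P ^ 2 := by
      rw [sq P, hP, Finset.sum_mul_sum]
      simp only [mul_pow]
    have hCS : X ^ 2 ≤ F * P ^ 2 := by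
      rw [← hPP, hX, hF]
      simp only [← Finset.sum_product']
      exact Finset.sum_mul_sq_le_sq_mul_sq _ (fun x : Fin d × Fin d => R x.1 x.2)
        (fun x : Fin d × Fin d => p x.1 * p x.2)
    have hS1 : S + F ≤ 1 / 64 := by nlinarith [sq_nonneg (Q 0 0)]
    have hX1 : X ≤ P / 8 := by
      refine le_trans (le_abs_self X) (abs_le_of_sq_le_sq ?_ (by positivity))
      nlinarith [sq_nonneg P]
    have hR'sum : ∑ i, ∑ j, R' i j ^ 2 = F + X + P ^ 2 / 4 := by
      rw [← hPP, hX, hF, Finset.sum_div]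
      simp only [Finset.sum_div, ← Finset.sum_add_distrib]
      refine Finset.sum_congr rfl fun i _ => Finset.sum_congr rfl fun j _ => ?_
      simp only [hR']; ring
    have hR'tr : ∑ i, R' i i = ∑ i, R i i + P / 2 := by
      simp only [hR', Finset.sum_add_distrib, hP, Finset.sum_div, sq]
    have hP2 : P ^ 2 / 4 ≤ P / 128 := by nlinarith
    have hS0 : 0 ≤ S := by linarith
    have key := ih R' (by rw [hR'sum]; linarith)
    rw [← (Fin.consEquiv (fun _ : Fin (d + 1) => Bool)).sum_comp, Fintype.sum_prod_type]
    simp only [Fin.consEquiv, Equiv.coe_fn_mk, Fintype.sum_bool]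
    rw [← Finset.sum_add_distrib]
    calc _ ≤ ∑ s : Fin d → Bool, 2 * (Real.exp (Q 0 0) * Real.exp (quadB R' s)) := by
          refine Finset.sum_le_sum fun s _ => ?_
          rw [quadB_cons, quadB_cons, ← Real.exp_add, hR', quadB_rank_one]
          have := exp_add_exp_le (Q 0 0) (quadB R s) (∑ j, p j * sgB (s j))
          simpa [sgB, hp, sub_eq_add_neg] using this
      _ = 2 * Real.exp (Q 0 0) * ∑ s : Fin d → Bool, Real.exp (quadB R' s) := by
          rw [Finset.mul_sum]; simp only [mul_assoc]
      _ ≤ 2 * Real.exp (Q 0 0) * (2 ^ d * Real.exp (∑ i, R' i i + 2 * ∑ i, ∑ j, R' i j ^ 2)) := by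
          gcongr
      _ = 2 ^ (d + 1) * Real.exp (Q 0 0 + (∑ i, R' i i + 2 * ∑ i, ∑ j, R' i j ^ 2)) := by
          rw [Real.exp_add (Q 0 0)]; ring
      _ ≤ _ := by
          refine mul_le_mul_of_nonneg_left (Real.exp_le_exp.mpr ?_) (by positivity)
          rw [hQtr, hR'tr, hQsum, hR'sum]
          nlinarith [sq_nonneg (Q 0 0)]

/-- the matrix of signs -/
def embB {d n : ℕ} (h : Fin n → Fin d → Bool) : Fin d → Fin n → ℝ := fun i c => sgB (h c i)

theorem embB_inj {d n : ℕ} : Function.Injective (embB (d := d) (n := n)) := by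
  intro h h' e
  funext c i
  have := congrFun (congrFun e i) c
  simp only [embB, sgB] at this
  cases h1 : h c i <;> cases h2 : h' c i <;> simp [h1, h2] at this ⊢ <;> norm_num at this

theorem hutch_embB {d n : ℕ} (M : Matrix (Fin d) (Fin d) ℝ) (h : Fin n → Fin d → Bool) :
    hutch M (embB h) = (1 / (n : ℝ)) * ∑ c, quadB M (h c) := by
  simp only [hutch, Matrix.trace, Matrix.diag, Matrix.mul_apply, Matrix.transpose_apply,
    Matrix.of_apply, quadB, embB]
  congr 1
  refine Finset.sum_congr rfl fun c _ => ?_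
  rw [Finset.sum_comm]
  simp only [Finset.sum_mul]
  rw [Finset.sum_comm]
  conv_rhs => rw [Finset.sum_comm]
  rw [Finset.sum_comm]
  rw [Finset.sum_comm]
  refine Finset.sum_congr rfl fun i _ => Finset.sum_congr rfl fun j _ => ?_
  ring

theorem rademacher_sgB (b : Bool) : rademacher {sgB b} = 2⁻¹ := by
  cases b <;> simp [rademacher, sgB, Set.indicator] <;> norm_num

theorem radMeasure_singleton {d n : ℕ} (h : Fin n → Fin d → Bool) :
    radMeasure d n {embB h} = (2⁻¹ : ENNReal) ^ (n * d) := by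
  simp [radMeasure, Measure.pi_singleton, embB, rademacher_sgB, pow_mul]

theorem radMeasure_lower {d n : ℕ} (G : Set (Fin d → Fin n → ℝ)) (δ : ℝ)
    [DecidablePred fun h : Fin n → Fin d → Bool => embB h ∉ G]
    (hb : (((Finset.univ.filter fun h : Fin n → Fin d → Bool => embB h ∉ G).card : ℕ) : ℝ)
      ≤ δ * 2 ^ (n * d)) :
    ENNReal.ofReal (1 - δ) ≤ radMeasure d n G := by
  classical
  set T := Finset.univ.filter fun h : Fin n → Fin d → Bool => embB h ∈ G with hT
  have hcard : (T.card : ℝ) + ((Finset.univ.filter fun h : Fin n → Fin d → Bool =>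
      embB h ∉ G).card : ℝ) = 2 ^ (n * d) := by
    have := Finset.card_filter_add_card_filter_not (s := Finset.univ)
      (fun h : Fin n → Fin d → Bool => embB h ∈ G)
    have h2 : (Finset.univ : Finset (Fin n → Fin d → Bool)).card = 2 ^ (n * d) := by
      simp [← pow_mul, mul_comm]
    rw [h2] at this
    rw [hT]
    have h3 := congrArg (Nat.cast : ℕ → ℝ) this
    push_cast at h3
    convert h3 using 3
  have hsub : ((T.image embB : Finset (Fin d → Fin n → ℝ)) : Set (Fin d → Fin n → ℝ)) ⊆ G := by
    intro g hg
    simp only [Finset.coe_image, Set.mem_image, Finset.mem_coe, hT, Finset.mem_filter] at hg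
    obtain ⟨h, hh, rfl⟩ := hg
    exact hh.2
  refine le_trans ?_ (measure_mono hsub)
  rw [← sum_measure_singleton, Finset.sum_image (fun _ _ _ _ e => embB_inj e)]
  simp only [radMeasure_singleton, Finset.sum_const, nsmul_eq_mul]
  have hpos : (0 : ℝ) < 2 ^ (n * d) := by positivity
  have : (T.card : ENNReal) * (2⁻¹ : ENNReal) ^ (n * d)
      = ENNReal.ofReal ((T.card : ℝ) * (2⁻¹ : ℝ) ^ (n * d)) := by
    rw [ENNReal.ofReal_mul (by positivity), ENNReal.ofReal_natCast,
      ENNReal.ofReal_pow (by positivity), ENNReal.ofReal_inv_of_pos (by norm_num)]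
    simp
  rw [this]
  apply ENNReal.ofReal_le_ofReal
  rw [inv_pow, ← div_eq_mul_inv, le_div_iff₀ hpos]
  linarith

theorem mgf_cols {d n : ℕ} (M : Matrix (Fin d) (Fin d) ℝ) (t : ℝ)
    (ht : t ^ 2 * ∑ i, ∑ j, M i j ^ 2 ≤ 1 / 64) :
    ∑ h : Fin n → Fin d → Bool, Real.exp (t * ∑ c, (quadB M (h c) - M.trace)) ≤
      2 ^ (n * d) * Real.exp (n * (2 * (t ^ 2 * ∑ i, ∑ j, M i j ^ 2))) := by
  have e : ∑ i, ∑ j, (t * M i j) ^ 2 = t ^ 2 * ∑ i, ∑ j, M i j ^ 2 := by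
    simp only [Finset.mul_sum, mul_pow]
  have h1 := mgf_bound d (fun i j => t * M i j) (by rw [e]; exact ht)
  rw [e] at h1
  have q : ∀ s, quadB (fun i j => t * M i j) s = t * quadB M s := by
    intro s; simp only [quadB, Finset.mul_sum, mul_assoc]
  have tr : ∑ i, t * M i i = t * M.trace := by
    simp [Matrix.trace, Finset.mul_sum]
  simp only [q, tr] at h1
  have h2 : ∑ s : Fin d → Bool, Real.exp (t * (quadB M s - M.trace)) ≤
      2 ^ d * Real.exp (2 * (t ^ 2 * ∑ i, ∑ j, M i j ^ 2)) := by
    have : ∀ s : Fin d → Bool, Real.exp (t * (quadB M s - M.trace)) =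
        Real.exp (t * quadB M s) * Real.exp (-(t * M.trace)) := by
      intro s; rw [← Real.exp_add]; ring_nf
    simp only [this, ← Finset.sum_mul]
    calc _ ≤ (2 ^ d * Real.exp (t * M.trace + 2 * (t ^ 2 * ∑ i, ∑ j, M i j ^ 2))) *
        Real.exp (-(t * M.trace)) := by gcongr
      _ = _ := by rw [mul_assoc, ← Real.exp_add]; ring_nf
  have h3 : ∀ h : Fin n → Fin d → Bool, Real.exp (t * ∑ c, (quadB M (h c) - M.trace)) =
      ∏ c, Real.exp (t * (quadB M (h c) - M.trace)) := by
    intro h; rw [Finset.mul_sum, Real.exp_sum]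
  simp only [h3]
  rw [← Fintype.sum_pow (fun s : Fin d → Bool => Real.exp (t * (quadB M s - M.trace)))]
  calc _ ≤ (2 ^ d * Real.exp (2 * (t ^ 2 * ∑ i, ∑ j, M i j ^ 2))) ^ n :=
        pow_le_pow_left₀ (Finset.sum_nonneg fun _ _ => (Real.exp_pos _).le) h2 n
    _ = _ := by
      rw [mul_pow, ← pow_mul, mul_comm d n, ← Real.exp_nat_mul]

theorem low_rank {d : ℕ} (A : Matrix (Fin d) (Fin d) ℝ) (hA : A.PosSemidef) (k : ℕ) (hk : 1 ≤ k) :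
    ∃ B : Matrix (Fin d) (Fin d) ℝ, B.rank ≤ k ∧
      ∑ i, ∑ j, (A - B) i j ^ 2 ≤ A.trace ^ 2 / k := by
  classical
  have hH := hA.isHermitian
  set lam := hH.eigenvalues with hlam
  have hl0 : ∀ i, 0 ≤ lam i := hA.eigenvalues_nonneg
  have htr : A.trace = ∑ i, lam i := by
    have := hH.trace_eq_sum_eigenvalues
    simpa using this
  have hk0 : (0 : ℝ) < k := by exact_mod_cast hk
  set τ := A.trace / k with hτ
  have hT0 : 0 ≤ A.trace := by rw [htr]; exact Finset.sum_nonneg fun i _ => hl0 i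
  set U : Matrix (Fin d) (Fin d) ℝ := (hH.eigenvectorUnitary : Matrix (Fin d) (Fin d) ℝ) with hU
  have hUU : star U * U = 1 := by simp [hU]
  have hspec : A = U * diagonal lam * star U := by
    have := hH.spectral_theorem
    simpa [Unitary.conjStarAlgAut_apply, Function.comp_def] using this
  set b : Fin d → ℝ := fun i => if τ < lam i then lam i else 0 with hb
  refine ⟨U * diagonal b * star U, ?_, ?_⟩
  · calc _ ≤ (U * diagonal b).rank := Matrix.rank_mul_le_left _ _
      _ ≤ (diagonal b).rank := Matrix.rank_mul_le_right _ _
      _ = Fintype.card {i // b i ≠ 0} := Matrix.rank_diagonal _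
      _ ≤ k := by
        rw [Fintype.card_subtype]
        by_contra hcon
        push Not at hcon
        set W := Finset.univ.filter fun i => b i ≠ 0 with hW
        have hmem : ∀ i ∈ W, τ < lam i := by
          intro i hi
          by_contra hc
          simp [hW, hb, hc] at hi
        have hne : W.Nonempty := Finset.card_pos.mp (by omega)
        have h1 : ∑ i ∈ W, τ < ∑ i ∈ W, lam i := Finset.sum_lt_sum_of_nonempty hne hmem
        have h2 : ∑ i ∈ W, lam i ≤ A.trace := by
          rw [htr]
          exact Finset.sum_le_univ_sum_of_nonneg hl0
        rw [Finset.sum_const, nsmul_eq_mul] at h1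
        have h3 : (k : ℝ) * τ ≤ W.card * τ := by
          have h5 : (k : ℝ) ≤ W.card := by exact_mod_cast hcon.le
          exact mul_le_mul_of_nonneg_right h5 (div_nonneg hT0 hk0.le)
        have h4 : (k : ℝ) * τ = A.trace := by rw [hτ]; field_simp
        linarith
  · set e : Fin d → ℝ := fun i => lam i - b i with he
    have hAB : A - U * diagonal b * star U = U * diagonal e * star U := by
      conv_lhs => rw [hspec]
      rw [← sub_mul, ← mul_sub, diagonal_sub]
    set D := A - U * diagonal b * star U with hD
    have hfro : ∑ i, ∑ j, D i j ^ 2 = (D * star D).trace := by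
      simp [Matrix.trace, Matrix.mul_apply, sq, star_apply]
    have hDD : D * star D = U * (diagonal e * diagonal e) * star U := by
      have hse : star (diagonal e) = diagonal e := by
        simp [star_eq_conjTranspose, diagonal_conjTranspose]
      rw [hAB, star_mul, star_mul, star_star, hse]
      calc _ = U * diagonal e * (star U * U) * diagonal e * star U := by simp only [mul_assoc]
        _ = _ := by rw [hUU]; simp only [mul_assoc, mul_one]
    rw [hfro, hDD, Matrix.trace_mul_comm, ← mul_assoc, hUU, one_mul, diagonal_mul_diagonal,
      trace_diagonal]
    calc ∑ i, e i * e i ≤ ∑ i, τ * lam i := by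
          refine Finset.sum_le_sum fun i _ => ?_
          simp only [he, hb]
          split_ifs with h
          · have : 0 ≤ τ := div_nonneg hT0 hk0.le
            simpa using mul_nonneg this (hl0 i)
          · push Not at h
            simpa using mul_le_mul_of_nonneg_right h (hl0 i)
      _ = _ := by rw [← Finset.mul_sum, ← htr, hτ]; ring

theorem stmt6 : ∃ c C : ℝ, 0 < c ∧ 0 < C ∧
    ∀ (d : ℕ) (A At Δ : Matrix (Fin d) (Fin d) ℝ) (δ : ℝ) (k ℓ : ℕ),
      A.PosSemidef → 0 < δ → δ ≤ 1 / 2 → 1 ≤ k → c * Real.log (1 / δ) ≤ (ℓ : ℝ) →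
      A.trace = At.trace + Δ.trace →
      (∀ B : Matrix (Fin d) (Fin d) ℝ, B.rank ≤ k → frobNorm Δ ≤ 2 * frobNorm (A - B)) →
      ENNReal.ofReal (1 - δ) ≤
        radMeasure d ℓ
          {g | |At.trace + hutch Δ g - A.trace| ≤
            2 * C * Real.sqrt (Real.log (1 / δ) / ((k : ℝ) * ℓ)) * A.trace} := by
  classical
  refine ⟨64, 4, by norm_num, by norm_num, ?_⟩
  intro d A At Δ δ k ℓ hA hδ hδ2 hk hℓ htr hB
  set L := Real.log (1 / δ) with hL
  have hLpos : 0 < L := Real.log_pos (by rw [lt_div_iff₀ hδ]; linarith)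
  have hℓ0 : (0 : ℝ) < ℓ := by linarith
  have hk0 : (0 : ℝ) < k := by exact_mod_cast hk
  have hT0 : 0 ≤ A.trace := hA.trace_nonneg
  set T := A.trace with hT
  set F := ∑ i, ∑ j, Δ i j ^ 2 with hF
  have hF0 : 0 ≤ F := Finset.sum_nonneg fun _ _ => Finset.sum_nonneg fun _ _ => sq_nonneg _
  have hFT : F ≤ 4 * T ^ 2 / k := by
    obtain ⟨B, hBr, hBf⟩ := low_rank A hA k hk
    have h := hB B hBr
    unfold frobNorm at h
    have h2 := pow_le_pow_left₀ (Real.sqrt_nonneg _) h 2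
    have h3 : 0 ≤ ∑ i, ∑ j, (A - B) i j ^ 2 := Finset.sum_nonneg fun _ _ =>
      Finset.sum_nonneg fun _ _ => sq_nonneg _
    rw [mul_pow, Real.sq_sqrt hF0, Real.sq_sqrt h3] at h2
    calc F ≤ _ := h2
      _ ≤ 2 ^ 2 * (T ^ 2 / k) := by gcongr
      _ = _ := by ring
  refine radMeasure_lower _ δ ?_
  set r := Real.sqrt (L / (k * ℓ)) with hr
  have hr2 : r ^ 2 = L / (k * ℓ) := Real.sq_sqrt (by positivity)
  have hr0 : 0 < r := Real.sqrt_pos.mpr (by positivity)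
  have herr : ∀ h : Fin ℓ → Fin d → Bool, At.trace + hutch Δ (embB h) - T =
      (1 / (ℓ : ℝ)) * ∑ c, (quadB Δ (h c) - Δ.trace) := by
    intro h
    rw [hutch_embB, htr, Finset.sum_sub_distrib]
    simp only [Finset.sum_const, Finset.card_univ, Fintype.card_fin, nsmul_eq_mul]
    field_simp
    ring
  rcases hT0.eq_or_lt with hTz | hTpos
  · have hFz : F = 0 := by
      rw [← hTz] at hFT
      apply le_antisymm _ hF0
      simpa using hFT
    have hΔ : ∀ i j, Δ i j = 0 := by
      intro i j
      have h1 := (Finset.sum_eq_zero_iff_of_nonneg (fun i _ =>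
        Finset.sum_nonneg fun _ _ => sq_nonneg _)).mp hFz i (Finset.mem_univ _)
      have h2 := (Finset.sum_eq_zero_iff_of_nonneg (fun j _ => sq_nonneg _)).mp h1 j
        (Finset.mem_univ _)
      exact pow_eq_zero_iff (two_ne_zero) |>.mp h2
    have : (Finset.univ.filter fun h : Fin ℓ → Fin d → Bool => embB h ∉
        {g | |At.trace + hutch Δ g - T| ≤ 2 * 4 * r * T}) = ∅ := by
      apply Finset.filter_eq_empty_iff.mpr
      intro h _
      simp only [Set.mem_ofPred_eq, not_not, herr]
      rw [← hTz]
      simp [quadB, hΔ, Matrix.trace]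
    rw [this]
    simp only [Finset.card_empty, Nat.cast_zero]
    positivity
  -- main case
  set t := k * r / (2 * T) with ht
  have ht0 : 0 < t := by positivity
  have ht2 : t ^ 2 * F ≤ L / ℓ := by
    calc t ^ 2 * F ≤ t ^ 2 * (4 * T ^ 2 / k) := by gcongr
      _ = r ^ 2 * k := by rw [ht]; field_simp; ring
      _ = _ := by rw [hr2]; field_simp
  have hLl : L / ℓ ≤ 1 / 64 := by
    rw [div_le_iff₀ hℓ0]; linarith
  have hm1 := mgf_cols (n := ℓ) Δ t (ht2.trans hLl)
  have hm2 := mgf_cols (n := ℓ) Δ (-t) (by rw [neg_sq]; exact ht2.trans hLl)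
  rw [neg_sq] at hm2
  have hexp : Real.exp (ℓ * (2 * (t ^ 2 * F))) ≤ Real.exp (2 * L) := by
    apply Real.exp_le_exp.mpr
    calc ℓ * (2 * (t ^ 2 * F)) ≤ ℓ * (2 * (L / ℓ)) := by gcongr
      _ = _ := by field_simp
  have hbad : ∀ h ∈ (Finset.univ.filter fun h : Fin ℓ → Fin d → Bool => embB h ∉
        {g | |At.trace + hutch Δ g - T| ≤ 2 * 4 * r * T}),
      Real.exp (4 * L) ≤ Real.exp (t * ∑ c, (quadB Δ (h c) - Δ.trace)) +
        Real.exp (-t * ∑ c, (quadB Δ (h c) - Δ.trace)) := by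
    intro h hh
    simp only [Finset.mem_filter, Finset.mem_univ, true_and, Set.mem_ofPred_eq, not_le, herr] at hh
    set Y := ∑ c, (quadB Δ (h c) - Δ.trace) with hY
    have h1 : 4 * L ≤ t * |Y| := by
      rw [abs_mul, abs_of_pos (by positivity : (0 : ℝ) < 1 / ℓ)] at hh
      have h3 : 2 * 4 * r * T * ℓ ≤ |Y| := by
        rw [one_div, ← div_eq_inv_mul, lt_div_iff₀ hℓ0] at hh
        exact hh.le
      calc 4 * L = 4 * (r ^ 2 * (k * ℓ)) := by rw [hr2]; field_simp
        _ = t * (2 * 4 * r * T * ℓ) := by rw [ht]; field_simp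
        _ ≤ _ := by gcongr
    rcases abs_cases Y with ⟨h2, _⟩ | ⟨h2, _⟩
    · rw [h2] at h1
      have := Real.exp_le_exp.mpr h1
      linarith [Real.exp_pos (-t * Y)]
    · rw [h2] at h1
      have := Real.exp_le_exp.mpr (show 4 * L ≤ -t * Y by linarith)
      linarith [Real.exp_pos (t * Y)]
  have hsum := Finset.sum_le_sum hbad
  rw [Finset.sum_const, nsmul_eq_mul] at hsum
  have hsum2 := hsum.trans (Finset.sum_le_univ_sum_of_nonneg (fun h => by positivity))
  rw [Finset.sum_add_distrib] at hsum2
  set N : ℝ := (((Finset.univ.filter fun h : Fin ℓ → Fin d → Bool => embB h ∉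
        {g | |At.trace + hutch Δ g - T| ≤ 2 * 4 * r * T}).card : ℕ) : ℝ) with hN
  have hE : Real.exp L = 1 / δ := Real.exp_log (by positivity)
  have hE2 : Real.exp (2 * L) = (1 / δ) ^ 2 := by rw [← hE, ← Real.exp_nat_mul]; norm_num
  have hE4 : Real.exp (4 * L) = (1 / δ) ^ 4 := by rw [← hE, ← Real.exp_nat_mul]; norm_num
  have hfin : N * Real.exp (4 * L) ≤ 2 * 2 ^ (ℓ * d) * Real.exp (2 * L) := by
    have : (2 : ℝ) ^ (ℓ * d) * Real.exp (ℓ * (2 * (t ^ 2 * F))) ≤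
        2 ^ (ℓ * d) * Real.exp (2 * L) := by gcongr
    linarith
  rw [hE2, hE4] at hfin
  have h5 : N ≤ 2 * 2 ^ (ℓ * d) * δ ^ 2 := by
    have h6 : N * (1 / δ) ^ 4 * δ ^ 4 ≤ 2 * 2 ^ (ℓ * d) * (1 / δ) ^ 2 * δ ^ 4 := by gcongr
    have e1 : N * (1 / δ) ^ 4 * δ ^ 4 = N := by field_simp
    have e2 : 2 * 2 ^ (ℓ * d) * (1 / δ) ^ 2 * δ ^ 4 = 2 * 2 ^ (ℓ * d) * δ ^ 2 := by field_simp
    rwa [e1, e2] at h6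
  calc N ≤ 2 * 2 ^ (ℓ * d) * δ ^ 2 := h5
    _ = (2 * δ) * (δ * 2 ^ (ℓ * d)) := by ring
    _ ≤ 1 * (δ * 2 ^ (ℓ * d)) := by gcongr; linarith
    _ = _ := one_mul _
end

section
/- There exists an absolute constant C > 0 with the following property. Let A ∈ ℝ^{d×d} be positive semidefinite, let δ ∈ (0, 1/2), let ε ∈ (0, 1), and let p, ℓ be integers with p ≥ C·(√(log(1/δ))/ε + log(1/δ)) and ℓ ≥ C·(√(log(1/δ))/ε + log(1/δ)). Let S ∈ ℝ^{d×p} and G ∈ ℝ^{d×ℓ} be random matrices whose entries are jointly i.i.d. Rademacher random variables, and let ω ↦ Q(ω) ∈ ℝ^{d×p} be any measurable map such that for every outcome ω, Q(ω)ᵀQ(ω) = I_p and the column space of A·S(ω) is contained in the column space of Q(ω). Then the estimator Hutch++(A) = tr(QᵀAQ) + (1/ℓ)·tr(Gᵀ(I − QQᵀ)A(I − QQᵀ)G) satisfies (1−ε)·tr(A) ≤ Hutch++(A) ≤ (1+ε)·tr(A) with probability at least 1 − δ. -/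
open MeasureTheory Matrix

/-- The Hutch++ estimator: `tr(QᵀAQ) + (1/n)·tr(gᵀ(I - QQᵀ)A(I - QQᵀ)g)`,
where `Q = Matrix.of q`. -/
noncomputable def hutchppEst {d p n : ℕ} (A : Matrix (Fin d) (Fin d) ℝ)
    (q : Fin d → Fin p → ℝ) (g : Fin d → Fin n → ℝ) : ℝ :=
  ((Matrix.of q)ᵀ * A * Matrix.of q).trace +
    (1 / (n : ℝ)) * ((Matrix.of g)ᵀ * (1 - Matrix.of q * (Matrix.of q)ᵀ) * A *
      (1 - Matrix.of q * (Matrix.of q)ᵀ) * Matrix.of g).trace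


noncomputable def Ex {α : Type*} [Fintype α] (f : α → ℝ) : ℝ := (∑ a, f a) / (Fintype.card α : ℝ)

lemma Ex_mono {α : Type*} [Fintype α] {f g : α → ℝ} (h : ∀ a, f a ≤ g a) : Ex f ≤ Ex g := by
  unfold Ex
  gcongr with a
  exact h a

lemma Ex_const {α : Type*} [Fintype α] [Nonempty α] (c : ℝ) : Ex (fun _ : α => c) = c := by
  unfold Ex
  simp

lemma Ex_add {α : Type*} [Fintype α] (f g : α → ℝ) : Ex (fun a => f a + g a) = Ex f + Ex g := by
  unfold Ex
  rw [Finset.sum_add_distrib, add_div]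

lemma Ex_sub {α : Type*} [Fintype α] (f g : α → ℝ) : Ex (fun a => f a - g a) = Ex f - Ex g := by
  unfold Ex
  rw [Finset.sum_sub_distrib, sub_div]

lemma Ex_mul_left {α : Type*} [Fintype α] (c : ℝ) (f : α → ℝ) :
    Ex (fun a => c * f a) = c * Ex f := by
  unfold Ex
  rw [← Finset.mul_sum, mul_div_assoc]

lemma Ex_nonneg {α : Type*} [Fintype α] {f : α → ℝ} (h : ∀ a, 0 ≤ f a) : 0 ≤ Ex f := by
  unfold Ex
  exact div_nonneg (Finset.sum_nonneg fun a _ => h a) (by positivity)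

lemma Ex_equiv {α β : Type*} [Fintype α] [Fintype β] (e : α ≃ β) (f : β → ℝ) :
    Ex (fun a => f (e a)) = Ex f := by
  unfold Ex
  rw [Fintype.card_congr e, Equiv.sum_comp e f]

lemma Ex_prod {α β : Type*} [Fintype α] [Fintype β] (f : α × β → ℝ) :
    Ex f = Ex fun a => Ex fun b => f (a, b) := by
  unfold Ex
  rw [Fintype.sum_prod_type, Fintype.card_prod, ← Finset.sum_div, div_div]
  push_cast
  rw [mul_comm]

lemma Ex_cons {β : Type*} [Fintype β] {n : ℕ} (f : (Fin (n + 1) → β) → ℝ) :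
    Ex f = Ex fun b => Ex fun t => f (Fin.cons b t) := by
  rw [← Ex_equiv (Fin.consEquiv (fun _ : Fin (n + 1) => β)) f, Ex_prod]
  rfl

lemma Ex_comm {α β : Type*} [Fintype α] [Fintype β] (f : α → β → ℝ) :
    (Ex fun a => Ex fun b => f a b) = Ex fun b => Ex fun a => f a b := by
  unfold Ex
  simp only [← Finset.sum_div]
  rw [Finset.sum_comm, div_right_comm]

/-- sign of a boolean -/
noncomputable def sg (b : Bool) : ℝ := if b then 1 else -1

lemma sg_sq (b : Bool) : sg b * sg b = 1 := by cases b <;> simp [sg]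

lemma Ex_bool (f : Bool → ℝ) : Ex f = (f true + f false) / 2 := by
  unfold Ex
  simp

noncomputable def quad {n : ℕ} (M : Fin n → Fin n → ℝ) (s : Fin n → ℝ) : ℝ :=
  ∑ i, ∑ j, M i j * (s i * s j)

noncomputable def fro2 {n : ℕ} (M : Fin n → Fin n → ℝ) : ℝ := ∑ i, ∑ j, (M i j) ^ 2

noncomputable def dg {n : ℕ} (M : Fin n → Fin n → ℝ) : ℝ := ∑ i, M i i

noncomputable def sv {n : ℕ} (t : Fin n → Bool) : Fin n → ℝ := fun i => sg (t i)

lemma fro2_nonneg {n : ℕ} (M : Fin n → Fin n → ℝ) : 0 ≤ fro2 M := by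
  unfold fro2; positivity

lemma sv_cons {n : ℕ} (b : Bool) (t : Fin n → Bool) :
    sv (Fin.cons b t : Fin (n + 1) → Bool) = Fin.cons (sg b) (sv t) := by
  funext i
  refine Fin.cases ?_ (fun j => ?_) i <;> simp [sv]

lemma quad_cons {n : ℕ} (M : Fin (n + 1) → Fin (n + 1) → ℝ) (hM : ∀ i j, M i j = M j i)
    (b : Bool) (t : Fin n → ℝ) :
    quad M (Fin.cons (sg b) t) = M 0 0 + 2 * sg b * (∑ j, M 0 j.succ * t j)
      + quad (fun i j => M i.succ j.succ) t := by
  unfold quad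
  simp only [Fin.sum_univ_succ, Fin.cons_zero, Fin.cons_succ, sg_sq, Finset.sum_add_distrib]
  have h1 : ∑ x : Fin n, M x.succ 0 * (t x * sg b) = sg b * ∑ j, M 0 j.succ * t j := by
    rw [Finset.mul_sum]
    exact Finset.sum_congr rfl fun i _ => by rw [hM]; ring
  have h2 : ∑ x : Fin n, M 0 x.succ * (sg b * t x) = sg b * ∑ j, M 0 j.succ * t j := by
    rw [Finset.mul_sum]
    exact Finset.sum_congr rfl fun i _ => by ring
  rw [h1, h2]; ring

lemma Ex_quad {n : ℕ} (M : Fin n → Fin n → ℝ) (hM : ∀ i j, M i j = M j i) :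
    Ex (fun t : Fin n → Bool => quad M (sv t)) = dg M := by
  induction n with
  | zero => simp [quad, dg, Ex]
  | succ n ih =>
    rw [Ex_cons, Ex_comm]
    simp only [sv_cons, quad_cons M hM, Ex_bool]
    have : ∀ t : Fin n → Bool, (M 0 0 + 2 * sg true * (∑ j, M 0 j.succ * sv t j)
      + quad (fun i j => M i.succ j.succ) (sv t) + (M 0 0 + 2 * sg false * (∑ j, M 0 j.succ * sv t j)
      + quad (fun i j => M i.succ j.succ) (sv t))) / 2 = M 0 0 + quad (fun i j => M i.succ j.succ) (sv t) := by
      intro t; simp [sg]; ring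
    simp only [this]
    rw [Ex_add, Ex_const, ih _ (fun i j => hM _ _)]
    simp [dg, Fin.sum_univ_succ]

/-- Hanson-Wright type exponential moment bound. -/
lemma hw {n : ℕ} (M : Fin n → Fin n → ℝ) (hM : ∀ i j, M i j = M j i) (h : fro2 M ≤ 1 / 16) :
    Ex (fun t : Fin n → Bool => Real.exp (quad M (sv t) - dg M)) ≤ Real.exp (2 * fro2 M) := by
  induction n with
  | zero => simp [quad, dg, Ex, fro2]
  | succ n ih =>
    rw [Ex_cons, Ex_comm]
    simp only [sv_cons, quad_cons M hM, Ex_bool]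
    set M' : Fin n → Fin n → ℝ := fun i j => M i.succ j.succ with hM'
    set v : Fin n → ℝ := fun j => M 0 j.succ with hv
    set M'' : Fin n → Fin n → ℝ := fun i j => M' i j + 2 * (v i * v j) with hM''
    set y : ℝ := ∑ j, v j ^ 2 with hy
    have hy0 : 0 ≤ y := by positivity
    have hdg : dg M = M 0 0 + dg M' := by simp [dg, Fin.sum_univ_succ, hM']
    have hdg' : dg M'' = dg M' + 2 * y := by
      simp only [dg, hM'', hy, Finset.sum_add_distrib, ← Finset.mul_sum, pow_two]
    have hq : ∀ t, quad M'' t = quad M' t + 2 * (∑ j, v j * t j) ^ 2 := by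
      intro t
      simp only [quad, hM'', add_mul, Finset.sum_add_distrib]
      congr 1
      rw [pow_two, Finset.sum_mul_sum, Finset.mul_sum]
      refine Finset.sum_congr rfl fun i _ => ?_
      rw [Finset.mul_sum]
      exact Finset.sum_congr rfl fun j _ => by ring
    have hfro : fro2 M = M 0 0 ^ 2 + 2 * y + fro2 M' := by
      simp only [fro2, Fin.sum_univ_succ, Finset.sum_add_distrib, hy, hv, hM']
      have : ∑ x : Fin n, M x.succ 0 ^ 2 = ∑ j : Fin n, M 0 j.succ ^ 2 :=
        Finset.sum_congr rfl fun i _ => by rw [hM]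
      rw [this]; ring
    set x : ℝ := Real.sqrt (fro2 M') with hx
    have hx0 : 0 ≤ x := Real.sqrt_nonneg _
    have hx2 : x ^ 2 = fro2 M' := Real.sq_sqrt (fro2_nonneg _)
    have hvv : ∑ i, ∑ j, (v i * v j) ^ 2 = y ^ 2 := by
      rw [hy, pow_two (∑ j, v j ^ 2), Finset.sum_mul_sum]
      exact Finset.sum_congr rfl fun i _ => Finset.sum_congr rfl fun j _ => by ring
    have hcs : ∑ i, ∑ j, M' i j * (v i * v j) ≤ x * y := by
      have h1 := Finset.sum_mul_sq_le_sq_mul_sq (Finset.univ : Finset (Fin n × Fin n))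
        (fun k => M' k.1 k.2) (fun k => v k.1 * v k.2)
      simp only [Fintype.sum_prod_type] at h1
      rw [hvv] at h1
      have h2 : (∑ i, ∑ j, M' i j * (v i * v j)) ^ 2 ≤ (x * y) ^ 2 := by
        rw [mul_pow, hx2]; exact h1
      exact abs_le_of_sq_le_sq' h2 (by positivity) |>.2
    have hfro'' : fro2 M'' ≤ (x + 2 * y) ^ 2 := by
      have : fro2 M'' = fro2 M' + 4 * (∑ i, ∑ j, M' i j * (v i * v j)) + 4 * y ^ 2 := by
        rw [← hvv]
        simp only [fro2, hM'', Finset.mul_sum, ← Finset.sum_add_distrib]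
        exact Finset.sum_congr rfl fun i _ => Finset.sum_congr rfl fun j _ => by ring
      rw [this, ← hx2]; nlinarith
    have hxy : x ^ 2 + 2 * y ≤ 1 / 16 := by
      rw [hx2]; nlinarith [sq_nonneg (M 0 0)]
    have hx4 : x ≤ 1 / 4 := by nlinarith
    have hxy4 : x + y ≤ 1 / 4 := by nlinarith
    have hstep : (x + 2 * y) ^ 2 ≤ x ^ 2 + 2 * y := by nlinarith
    have hstep2 : 2 * y + 2 * (x + 2 * y) ^ 2 ≤ 2 * (x ^ 2 + 2 * y) := by nlinarith
    have hM''s : ∀ i j, M'' i j = M'' j i := by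
      intro i j; simp only [hM'', hM']; rw [hM]; ring
    have key := ih M'' hM''s (hfro''.trans (hstep.trans hxy))
    have hpt : ∀ t : Fin n → Bool,
        (Real.exp (M 0 0 + 2 * sg true * (∑ j, v j * sv t j) + quad M' (sv t) - dg M) +
          Real.exp (M 0 0 + 2 * sg false * (∑ j, v j * sv t j) + quad M' (sv t) - dg M)) / 2
        ≤ Real.exp (2 * y) * Real.exp (quad M'' (sv t) - dg M'') := by
      intro t
      set z := ∑ j, v j * sv t j with hz
      have hc := Real.cosh_le_exp_half_sq (2 * z)
      rw [Real.cosh_eq] at hc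
      have e1 : M 0 0 + 2 * sg true * z + quad M' (sv t) - dg M
          = 2 * z + (quad M' (sv t) - dg M') := by simp [sg, hdg]; ring
      have e2 : M 0 0 + 2 * sg false * z + quad M' (sv t) - dg M
          = -(2 * z) + (quad M' (sv t) - dg M') := by simp [sg, hdg]; ring
      have e3 : 2 * y + (quad M'' (sv t) - dg M'')
          = (2 * z) ^ 2 / 2 + (quad M' (sv t) - dg M') := by rw [hq, hdg', ← hz]; ring
      rw [e1, e2, ← Real.exp_add, e3, Real.exp_add, Real.exp_add, Real.exp_add]
      have := mul_le_mul_of_nonneg_right hc (Real.exp_pos (quad M' (sv t) - dg M')).le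
      linarith
    refine (Ex_mono hpt).trans ?_
    rw [Ex_mul_left]
    calc Real.exp (2 * y) * _ ≤ Real.exp (2 * y) * Real.exp (2 * fro2 M'') := by gcongr
      _ = Real.exp (2 * y + 2 * fro2 M'') := by rw [Real.exp_add]
      _ ≤ _ := by
        apply Real.exp_le_exp.2
        rw [hfro, ← hx2]
        nlinarith [sq_nonneg (M 0 0)]


lemma sq_le_exp_add (x : ℝ) : x ^ 2 ≤ Real.exp x + Real.exp (-x) - 2 := by
  have key : ∀ y : ℝ, 0 ≤ y → y ^ 2 ≤ Real.exp y + Real.exp (-y) - 2 := by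
    intro y hy
    have h := Real.self_le_sinh_iff.2 (show (0:ℝ) ≤ y / 2 by positivity)
    rw [Real.sinh_eq] at h
    have h1 : Real.exp y = Real.exp (y / 2) ^ 2 := by rw [← Real.exp_nat_mul]; congr 1; push_cast; ring
    have h2 : Real.exp (-y) = Real.exp (-(y / 2)) ^ 2 := by
      rw [← Real.exp_nat_mul]; congr 1; push_cast; ring
    have h3 : Real.exp (y / 2) * Real.exp (-(y / 2)) = 1 := by rw [← Real.exp_add]; simp
    rw [h1, h2]
    nlinarith
  rcases le_total 0 x with h | h
  · exact key x h
  · have := key (-x) (by linarith)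
    rw [neg_neg] at this
    nlinarith

lemma quad_smul {n : ℕ} (c : ℝ) (M : Fin n → Fin n → ℝ) (s : Fin n → ℝ) :
    quad (fun i j => c * M i j) s = c * quad M s := by
  simp only [quad, Finset.mul_sum, mul_assoc]

lemma dg_smul {n : ℕ} (c : ℝ) (M : Fin n → Fin n → ℝ) :
    dg (fun i j => c * M i j) = c * dg M := by
  simp only [dg, Finset.mul_sum]

lemma fro2_smul {n : ℕ} (c : ℝ) (M : Fin n → Fin n → ℝ) :
    fro2 (fun i j => c * M i j) = c ^ 2 * fro2 M := by
  simp only [fro2, Finset.mul_sum, mul_pow]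

lemma hw_scaled {n : ℕ} (M : Fin n → Fin n → ℝ) (hM : ∀ i j, M i j = M j i) (c : ℝ)
    (h : c ^ 2 * fro2 M ≤ 1 / 16) :
    Ex (fun t : Fin n → Bool => Real.exp (c * (quad M (sv t) - dg M)))
      ≤ Real.exp (2 * (c ^ 2 * fro2 M)) := by
  have := hw (fun i j => c * M i j) (fun i j => by rw [hM]) (by rw [fro2_smul]; exact h)
  simpa only [quad_smul, dg_smul, fro2_smul, ← mul_sub] using this

lemma second_moment {n : ℕ} (M : Fin n → Fin n → ℝ) (hM : ∀ i j, M i j = M j i) (K : ℝ)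
    (hK : 0 < K) (h : fro2 M ≤ K) :
    Ex (fun t : Fin n → Bool => (quad M (sv t) - dg M) ^ 2) ≤ 5 * K := by
  set c : ℝ := (4 * Real.sqrt K)⁻¹ with hc
  have hc2 : c ^ 2 = (16 * K)⁻¹ := by
    rw [hc, inv_pow, mul_pow, Real.sq_sqrt hK.le]; norm_num
  have hcK : c ^ 2 * K = 1 / 16 := by rw [hc2]; field_simp
  have hcM : c ^ 2 * fro2 M ≤ 1 / 16 := by
    rw [← hcK]; gcongr
  have h1 := hw_scaled M hM c hcM
  have h2 := hw_scaled M hM (-c) (by simpa using hcM)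
  have hexp : Real.exp (2 * (c ^ 2 * fro2 M)) ≤ 8 / 7 := by
    have : Real.exp (2 * (c ^ 2 * fro2 M)) ≤ Real.exp (1 / 8) := Real.exp_le_exp.2 (by linarith)
    have h3 := Real.one_sub_le_exp_neg (1 / 8)
    have h4 : Real.exp (1 / 8) * Real.exp (-(1 / 8)) = 1 := by rw [← Real.exp_add]; simp
    nlinarith [Real.exp_pos (1 / 8)]
  rw [neg_sq] at h2
  have h5 : Ex (fun t : Fin n → Bool => c ^ 2 * (quad M (sv t) - dg M) ^ 2) ≤
      Ex (fun t : Fin n → Bool => Real.exp (c * (quad M (sv t) - dg M)) +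
        Real.exp (-c * (quad M (sv t) - dg M)) - 2) := by
    refine Ex_mono fun t => ?_
    have := sq_le_exp_add (c * (quad M (sv t) - dg M))
    rw [mul_pow, ← neg_mul] at this
    exact this
  rw [Ex_mul_left, Ex_sub, Ex_add, Ex_const] at h5
  have h6 : c ^ 2 * Ex (fun t : Fin n → Bool => (quad M (sv t) - dg M) ^ 2) ≤ c ^ 2 * (5 * K) := by
    nlinarith
  exact le_of_mul_le_mul_left h6 (by rw [hc2]; positivity)

lemma psd_symm {d : ℕ} {A : Matrix (Fin d) (Fin d) ℝ} (hA : A.PosSemidef) (i j : Fin d) :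
    A i j = A j i := by
  have := hA.1.apply i j
  simpa using this.symm

lemma psd_transpose {d : ℕ} {A : Matrix (Fin d) (Fin d) ℝ} (hA : A.PosSemidef) : Aᵀ = A := by
  ext i j; exact psd_symm hA j i

lemma quad_eq {d : ℕ} (A : Matrix (Fin d) (Fin d) ℝ) (s : Fin d → ℝ) :
    quad A s = s ⬝ᵥ A *ᵥ s := by
  simp only [quad, dotProduct, mulVec, Finset.mul_sum]
  exact Finset.sum_congr rfl fun i _ => Finset.sum_congr rfl fun j _ => by ring

lemma dg_eq {d : ℕ} (A : Matrix (Fin d) (Fin d) ℝ) : dg A = A.trace := rfl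

lemma fro2_eq {d : ℕ} (A : Matrix (Fin d) (Fin d) ℝ) : fro2 A = (Aᵀ * A).trace := by
  simp only [fro2, trace, diag, mul_apply, transpose_apply]
  rw [Finset.sum_comm]
  exact Finset.sum_congr rfl fun i _ => Finset.sum_congr rfl fun j _ => by ring

lemma psd_quad_nonneg {d : ℕ} {A : Matrix (Fin d) (Fin d) ℝ} (hA : A.PosSemidef) (s : Fin d → ℝ) :
    0 ≤ s ⬝ᵥ A *ᵥ s := by
  simpa using hA.dotProduct_mulVec_nonneg s

lemma dot_symm {d : ℕ} {A : Matrix (Fin d) (Fin d) ℝ} (hA : Aᵀ = A) (x s : Fin d → ℝ) :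
    s ⬝ᵥ A *ᵥ x = x ⬝ᵥ A *ᵥ s := by
  rw [dotProduct_mulVec, ← mulVec_transpose, hA, dotProduct_comm]

lemma psd_cs {d : ℕ} {A : Matrix (Fin d) (Fin d) ℝ} (hA : A.PosSemidef) (x s : Fin d → ℝ) :
    (x ⬝ᵥ A *ᵥ s) ^ 2 ≤ (x ⬝ᵥ A *ᵥ x) * (s ⬝ᵥ A *ᵥ s) := by
  have h := discrim_le_zero (a := s ⬝ᵥ A *ᵥ s) (b := 2 * (x ⬝ᵥ A *ᵥ s)) (c := x ⬝ᵥ A *ᵥ x)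
    (fun r => by
      have h1 := psd_quad_nonneg hA (x + r • s)
      have h2 : (x + r • s) ⬝ᵥ A *ᵥ (x + r • s) = s ⬝ᵥ A *ᵥ s * (r * r) +
          2 * (x ⬝ᵥ A *ᵥ s) * r + x ⬝ᵥ A *ᵥ x := by
        simp only [mulVec_add, mulVec_smul, dotProduct_add, add_dotProduct, smul_dotProduct,
          dotProduct_smul, smul_eq_mul]
        rw [dot_symm (psd_transpose hA) x s]; ring
      linarith)
  rw [discrim] at h
  nlinarith

lemma mulVec_zero_of_quad {d : ℕ} {A : Matrix (Fin d) (Fin d) ℝ} (hA : A.PosSemidef)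
    (s : Fin d → ℝ) (h : s ⬝ᵥ A *ᵥ s = 0) : A *ᵥ s = 0 := by
  have := psd_cs hA (A *ᵥ s) s
  rw [h, mul_zero] at this
  have h2 : (A *ᵥ s) ⬝ᵥ (A *ᵥ s) = 0 := by nlinarith
  exact dotProduct_self_eq_zero.1 h2

/-- One step of partial Cholesky / Nystrom elimination. -/
noncomputable def nystep {d : ℕ} (A : Matrix (Fin d) (Fin d) ℝ) (s : Fin d → ℝ) :
    Matrix (Fin d) (Fin d) ℝ :=
  A - (s ⬝ᵥ A *ᵥ s)⁻¹ • vecMulVec (A *ᵥ s) (A *ᵥ s)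

lemma nystep_psd {d : ℕ} {A : Matrix (Fin d) (Fin d) ℝ} (hA : A.PosSemidef) (s : Fin d → ℝ) :
    (nystep A s).PosSemidef := by
  refine PosSemidef.of_dotProduct_mulVec_nonneg ?_ ?_
  · ext i j
    simp only [nystep, conjTranspose_apply, Matrix.sub_apply, Matrix.smul_apply, vecMulVec_apply, star_trivial,
      smul_eq_mul]
    rw [psd_symm hA j i]; ring
  · intro x
    simp only [star_trivial, nystep, sub_mulVec, smul_mulVec, dotProduct_sub, dotProduct_smul,
      smul_eq_mul, vecMulVec_mulVec]
    have h := psd_cs hA x s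
    have h0 := psd_quad_nonneg hA s
    have hx := psd_quad_nonneg hA x
    have e : MulOpposite.op ((A *ᵥ s) ⬝ᵥ x) • (x ⬝ᵥ A *ᵥ s) = (x ⬝ᵥ A *ᵥ s) ^ 2 := by
      rw [op_smul_eq_smul, smul_eq_mul, dotProduct_comm (A *ᵥ s) x]; ring
    rw [e]
    rcases h0.eq_or_lt with h0 | h0
    · rw [← h0]; simpa using hx
    · have : (s ⬝ᵥ A *ᵥ s)⁻¹ * (x ⬝ᵥ A *ᵥ s) ^ 2 ≤ x ⬝ᵥ A *ᵥ x := by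
        rw [inv_mul_le_iff₀ h0]; linarith
      linarith

lemma nystep_trace {d : ℕ} (A : Matrix (Fin d) (Fin d) ℝ) (s : Fin d → ℝ) :
    (nystep A s).trace = A.trace - ((A *ᵥ s) ⬝ᵥ (A *ᵥ s)) / (s ⬝ᵥ A *ᵥ s) := by
  simp only [nystep, trace_sub, trace_smul, trace_vecMulVec, smul_eq_mul]
  ring

lemma nystep_fro2 {d : ℕ} {A : Matrix (Fin d) (Fin d) ℝ} (hA : A.PosSemidef) (s : Fin d → ℝ) :
    fro2 (nystep A s) ≤ fro2 A := by
  have hB := nystep_psd hA s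
  set B := nystep A s with hBd
  set V := (s ⬝ᵥ A *ᵥ s)⁻¹ • vecMulVec (A *ᵥ s) (A *ᵥ s) with hV
  have hAB : A = B + V := by rw [hBd, nystep]; simp [hV]
  have h0 := psd_quad_nonneg hA s
  rw [fro2_eq, fro2_eq, psd_transpose hA, psd_transpose hB]
  have e : (A * A).trace - (B * B).trace = (A * V).trace + (B * V).trace := by
    have : A * A - B * B = A * V + V * B := by
      have : V = A - B := by rw [hAB]; simp
      rw [this]; noncomm_ring
    rw [← trace_sub, this, trace_add, trace_mul_comm V B]
  have hpos : ∀ M : Matrix (Fin d) (Fin d) ℝ, M.PosSemidef → 0 ≤ (M * V).trace := by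
    intro M hM
    rw [hV, mul_smul_comm, trace_smul, mul_vecMulVec, trace_vecMulVec, smul_eq_mul,
      dotProduct_comm (M *ᵥ (A *ᵥ s))]
    exact mul_nonneg (inv_nonneg.2 h0) (psd_quad_nonneg hM _)
  linarith [hpos A hA, hpos B hB]


lemma quad_sq {d : ℕ} {A : Matrix (Fin d) (Fin d) ℝ} (hA : Aᵀ = A) (s : Fin d → ℝ) :
    quad (A * A) s = (A *ᵥ s) ⬝ᵥ (A *ᵥ s) := by
  rw [quad_eq, ← mulVec_mulVec, dotProduct_mulVec, ← mulVec_transpose, hA]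

lemma fro2_sq_le {d : ℕ} {A : Matrix (Fin d) (Fin d) ℝ} (hA : Aᵀ = A) :
    fro2 (A * A) ≤ (fro2 A) ^ 2 := by
  unfold fro2
  rw [pow_two (∑ i, ∑ j, A i j ^ 2), Finset.sum_mul_sum]
  refine Finset.sum_le_sum fun i _ => Finset.sum_le_sum fun j _ => ?_
  rw [mul_apply]
  refine (Finset.sum_mul_sq_le_sq_mul_sq _ _ _).trans_eq ?_
  congr 1
  refine Finset.sum_congr rfl fun k _ => ?_
  conv_lhs => rw [← hA, transpose_apply]

lemma pointwise_bound (X Y m τ κ : ℝ) (hX : 0 ≤ X) (hY : 0 ≤ Y) (hXY : Y = 0 → X = 0)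
    (hm : 0 < m) (hτ : 0 < τ) (hκ : 0 < κ) (h1 : 80 * τ ≤ κ * m) :
    Real.exp (-(κ * (X / Y))) ≤
      1 - 63 / 100 * ((X / m - 1 / 2) * (23 - X / m) / 127 - Y / (40 * τ)) := by
  have hle1 : Real.exp (-(κ * (X / Y))) ≤ 1 := by
    apply Real.exp_le_one_iff.2
    have : 0 ≤ κ * (X / Y) := by positivity
    linarith
  set u := X / m with hu
  have hu0 : 0 ≤ u := by positivity
  have hw0 : 0 ≤ Y / (40 * τ) := by positivity
  have hq : (u - 1 / 2) * (23 - u) / 127 ≤ 1 := by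
    nlinarith [sq_nonneg (u - 47 / 4)]
  by_cases hux : u < 1 / 2
  · have : (u - 1 / 2) * (23 - u) / 127 ≤ 0 := by
      have : (u - 1 / 2) * (23 - u) ≤ 0 := by nlinarith
      linarith
    linarith
  push Not at hux
  by_cases hy : Y ≤ 40 * τ
  · have hXm : m / 2 ≤ X := by
      rw [hu, le_div_iff₀ hm] at hux; linarith
    have hYpos : 0 < Y := by
      rcases hY.eq_or_lt with h | h
      · have := hXY h.symm; linarith
      · exact h
    have hbig : 1 ≤ κ * (X / Y) := by
      rw [← mul_div_assoc, le_div_iff₀ hYpos]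
      nlinarith
    have : Real.exp (-(κ * (X / Y))) ≤ Real.exp (-1) := Real.exp_le_exp.2 (by linarith)
    have h3 := Real.exp_neg_one_lt_d9
    nlinarith
  · push Not at hy
    have : 1 ≤ Y / (40 * τ) := by
      rw [le_div_iff₀ (by positivity)]; linarith
    linarith

lemma one_step {d : ℕ} {A : Matrix (Fin d) (Fin d) ℝ} (hA : A.PosSemidef) (κ : ℝ) (hκ : 0 < κ)
    (hm : 0 < fro2 A) (hτ : 0 < A.trace) (h : 80 * A.trace ≤ κ * fro2 A) :
    Ex (fun t : Fin d → Bool => Real.exp (-(κ * (((A *ᵥ sv t) ⬝ᵥ (A *ᵥ sv t)) /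
      (sv t ⬝ᵥ A *ᵥ sv t))))) ≤ 99 / 100 := by
  have hT := psd_transpose hA
  set m := fro2 A with hmd
  set τ := A.trace with hτd
  have hAAs : ∀ i j, (A * A) i j = (A * A) j i := by
    intro i j
    have : (A * A)ᵀ = A * A := by rw [transpose_mul, hT]
    conv_lhs => rw [← this, transpose_apply]
  have hdgm : dg (A * A) = m := by rw [hmd, fro2_eq, hT]; rfl
  have hX1 : Ex (fun t : Fin d → Bool => (A *ᵥ sv t) ⬝ᵥ (A *ᵥ sv t)) = m := by
    have := Ex_quad (A * A) hAAs
    simp only [quad_sq hT] at this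
    rw [this, hdgm]
  have hX2 := second_moment (A * A) hAAs (m ^ 2) (by positivity) (fro2_sq_le hT)
  simp only [quad_sq hT, hdgm] at hX2
  have hY1 : Ex (fun t : Fin d → Bool => sv t ⬝ᵥ A *ᵥ sv t) = τ := by
    have := Ex_quad A (psd_symm hA)
    simp only [quad_eq] at this
    rw [this]; rfl
  have hpt : ∀ t : Fin d → Bool, Real.exp (-(κ * (((A *ᵥ sv t) ⬝ᵥ (A *ᵥ sv t)) /
      (sv t ⬝ᵥ A *ᵥ sv t)))) ≤
      ((1 - 63 / 100 * (-(21 / 2) / 127)) - 63 / 100 * (43 / 2 / 127 / m) * ((A *ᵥ sv t) ⬝ᵥ (A *ᵥ sv t))) +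
        63 / 100 * (1 / 127 / m ^ 2) * ((A *ᵥ sv t) ⬝ᵥ (A *ᵥ sv t) - m) ^ 2 +
        63 / 100 * (1 / (40 * τ)) * (sv t ⬝ᵥ A *ᵥ sv t) := by
    intro t
    have hX : 0 ≤ (A *ᵥ sv t) ⬝ᵥ (A *ᵥ sv t) := Finset.sum_nonneg fun i _ => mul_self_nonneg _
    have := pointwise_bound ((A *ᵥ sv t) ⬝ᵥ (A *ᵥ sv t)) (sv t ⬝ᵥ A *ᵥ sv t) m τ κ hX
      (psd_quad_nonneg hA _) (fun h0 => by rw [mulVec_zero_of_quad hA _ h0]; simp) hm hτ hκ h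
    refine this.trans (le_of_eq ?_)
    field_simp
    ring
  refine (Ex_mono hpt).trans ?_
  rw [Ex_add, Ex_add, Ex_sub, Ex_const, Ex_mul_left, Ex_mul_left, Ex_mul_left, hX1, hY1]
  have e1 : 63 / 100 * (43 / 2 / 127 / m) * m = 63 / 100 * (43 / 2 / 127) := by field_simp
  have e3 : 63 / 100 * (1 / (40 * τ)) * τ = 63 / 100 * (1 / 40) := by field_simp
  have e2 : 63 / 100 * (1 / 127 / m ^ 2) *
      Ex (fun t : Fin d → Bool => ((A *ᵥ sv t) ⬝ᵥ (A *ᵥ sv t) - m) ^ 2) ≤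
      63 / 100 * (5 / 127) := by
    calc _ ≤ 63 / 100 * (1 / 127 / m ^ 2) * (5 * m ^ 2) := by gcongr
      _ = _ := by field_simp
  rw [e1, e3]
  linarith

/-- Iterated elimination. -/
noncomputable def nys {d : ℕ} : (n : ℕ) → (Fin n → Fin d → ℝ) → Matrix (Fin d) (Fin d) ℝ →
    Matrix (Fin d) (Fin d) ℝ
  | 0, _, A => A
  | n + 1, s, A => nys n (fun i => s i.succ) (nystep A (s 0))

lemma nys_fro2 {d : ℕ} (n : ℕ) (s : Fin n → Fin d → ℝ) (A : Matrix (Fin d) (Fin d) ℝ)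
    (hA : A.PosSemidef) : fro2 (nys n s A) ≤ fro2 A := by
  induction n generalizing A with
  | zero => exact le_rfl
  | succ n ih => exact (ih _ _ (nystep_psd hA _)).trans (nystep_fro2 hA _)

lemma nys_psd {d : ℕ} (n : ℕ) (s : Fin n → Fin d → ℝ) (A : Matrix (Fin d) (Fin d) ℝ)
    (hA : A.PosSemidef) : (nys n s A).PosSemidef := by
  induction n generalizing A with
  | zero => exact hA
  | succ n ih => exact (ih _ _ (nystep_psd hA _))

lemma nys_proj {d : ℕ} (n : ℕ) (s : Fin n → Fin d → ℝ) (A P : Matrix (Fin d) (Fin d) ℝ)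
    (h : ∀ i, P *ᵥ (A *ᵥ s i) = 0) : P * nys n s A = P * A := by
  induction n generalizing A with
  | zero => rfl
  | succ n ih =>
    have h1 : P * nystep A (s 0) = P * A := by
      rw [nystep, mul_sub, mul_smul_comm, mul_vecMulVec, h 0]
      simp
    rw [nys, ih _ _ (fun i => by rw [mulVec_mulVec, h1, ← mulVec_mulVec, h]), h1]

lemma nys_tail {d : ℕ} (n : ℕ) (A : Matrix (Fin d) (Fin d) ℝ) (hA : A.PosSemidef) (r T : ℝ)
    (hr : 0 < r) (hT : 0 < T) (hAT : A.trace ≤ T) :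
    Ex (fun S : Fin n → Fin d → Bool =>
      if r * T ≤ fro2 (nys n (fun i => sv (S i)) A) then (1 : ℝ) else 0)
      ≤ Real.exp (80 / r * A.trace) * (99 / 100) ^ n := by
  induction n generalizing A with
  | zero =>
    have : 1 ≤ Real.exp (80 / r * A.trace) :=
      Real.one_le_exp (mul_nonneg (by positivity) hA.trace_nonneg)
    refine (Ex_mono (g := fun _ => (1:ℝ)) fun S => by split_ifs <;> norm_num).trans ?_
    rw [Ex_const]; simpa using this
  | succ n ih =>
    by_cases hF : r * T ≤ fro2 A
    · have hm : 0 < fro2 A := lt_of_lt_of_le (by positivity) hF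
      have hτ : 0 < A.trace := by
        rcases hA.trace_nonneg.eq_or_lt with h | h
        · exfalso
          have : A = 0 := by
            exact hA.trace_eq_zero_iff.1 h.symm
          rw [this] at hm
          simp [fro2] at hm
        · exact h
      rw [Ex_cons]
      have h1 : ∀ b : Fin d → Bool, (Ex fun S : Fin n → Fin d → Bool =>
          if r * T ≤ fro2 (nys (n + 1) (fun i => sv ((Fin.cons b S : Fin (n+1) → Fin d → Bool) i)) A)
          then (1 : ℝ) else 0) ≤ (Real.exp (80 / r * A.trace) * (99 / 100) ^ n) *
            Real.exp (-(80 / r * (((A *ᵥ sv b) ⬝ᵥ (A *ᵥ sv b)) / (sv b ⬝ᵥ A *ᵥ sv b)))) := by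
        intro b
        have hX : 0 ≤ ((A *ᵥ sv b) ⬝ᵥ (A *ᵥ sv b)) / (sv b ⬝ᵥ A *ᵥ sv b) :=
          div_nonneg (Finset.sum_nonneg fun i _ => mul_self_nonneg _) (psd_quad_nonneg hA _)
        have h2 := ih (nystep A (sv b)) (nystep_psd hA _) (by rw [nystep_trace]; linarith)
        simp only [nys, Fin.cons_zero, Fin.cons_succ]
        refine h2.trans (le_of_eq ?_)
        rw [nystep_trace, mul_sub, sub_eq_add_neg, Real.exp_add]
        ring
      refine (Ex_mono h1).trans ?_
      rw [Ex_mul_left]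
      have h3 := one_step hA (80 / r) (by positivity) hm hτ (by
        rw [div_mul_eq_mul_div, le_div_iff₀ hr]
        nlinarith)
      rw [pow_succ, ← mul_assoc]
      gcongr
    · refine (Ex_mono (g := fun _ => (0:ℝ)) fun S => ?_).trans ?_
      · rw [if_neg]
        intro h
        exact hF (h.trans (nys_fro2 _ _ _ hA))
      · rw [Ex_const]; positivity


lemma hutch_mgf {d : ℕ} (n : ℕ) (B : Fin d → Fin d → ℝ) (hB : ∀ i j, B i j = B j i) (c : ℝ)
    (h : c ^ 2 * fro2 B ≤ 1 / 16) :
    Ex (fun G : Fin n → Fin d → Bool => Real.exp (c * ∑ j, (quad B (sv (G j)) - dg B)))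
      ≤ Real.exp (n * (2 * (c ^ 2 * fro2 B))) := by
  induction n with
  | zero => simp [Ex]
  | succ n ih =>
    rw [Ex_cons]
    simp only [Fin.sum_univ_succ, Fin.cons_zero, Fin.cons_succ, mul_add, Real.exp_add, Ex_mul_left]
    have h1 : ∀ b : Fin d → Bool, Real.exp (c * (quad B (sv b) - dg B)) *
        (Ex fun G : Fin n → Fin d → Bool => Real.exp (c * ∑ j, (quad B (sv (G j)) - dg B))) ≤
        Real.exp (n * (2 * (c ^ 2 * fro2 B))) * Real.exp (c * (quad B (sv b) - dg B)) := by
      intro b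
      rw [mul_comm]
      gcongr
    refine (Ex_mono h1).trans ?_
    rw [Ex_mul_left]
    have := hw_scaled B hB c h
    push_cast
    rw [add_mul, one_mul, Real.exp_add]
    gcongr

lemma hutch_tail {d : ℕ} (n : ℕ) (B : Fin d → Fin d → ℝ) (hB : ∀ i j, B i j = B j i) (c a : ℝ)
    (hc : 0 ≤ c) (h : c ^ 2 * fro2 B ≤ 1 / 16) :
    Ex (fun G : Fin n → Fin d → Bool =>
      if a ≤ |∑ j, (quad B (sv (G j)) - dg B)| then (1 : ℝ) else 0)
      ≤ 2 * Real.exp (n * (2 * (c ^ 2 * fro2 B)) - c * a) := by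
  have h1 := hutch_mgf n B hB c h
  have h2 := hutch_mgf n B hB (-c) (by simpa using h)
  rw [neg_sq] at h2
  have hpt : ∀ G : Fin n → Fin d → Bool,
      (if a ≤ |∑ j, (quad B (sv (G j)) - dg B)| then (1 : ℝ) else 0) ≤
      Real.exp (-(c * a)) * (Real.exp (c * ∑ j, (quad B (sv (G j)) - dg B)) +
        Real.exp (-c * ∑ j, (quad B (sv (G j)) - dg B))) := by
    intro G
    set Z := ∑ j, (quad B (sv (G j)) - dg B)
    rw [mul_add, ← Real.exp_add, ← Real.exp_add]
    split_ifs with hZ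
    · rcases le_abs.1 hZ with h | h
      · have : 1 ≤ Real.exp (-(c * a) + c * Z) := Real.one_le_exp (by nlinarith)
        linarith [Real.exp_pos (-(c * a) + -c * Z)]
      · have : 1 ≤ Real.exp (-(c * a) + -c * Z) := Real.one_le_exp (by nlinarith)
        linarith [Real.exp_pos (-(c * a) + c * Z)]
    · positivity
  refine (Ex_mono hpt).trans ?_
  rw [Ex_mul_left, Ex_add, sub_eq_add_neg, Real.exp_add]
  have := Real.exp_pos (-(c * a))
  nlinarith

lemma fro2_proj {d : ℕ} {P N : Matrix (Fin d) (Fin d) ℝ} (hP : Pᵀ = P) (hPP : P * P = P)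
    (hN : Nᵀ = N) : fro2 (P * N * P) ≤ fro2 N := by
  have hfro : ∀ M : Matrix (Fin d) (Fin d) ℝ, 0 ≤ (Mᵀ * M).trace := by
    intro M; rw [← fro2_eq]; exact fro2_nonneg _
  set R := 1 - P with hR
  have hRt : Rᵀ = R := by rw [hR, transpose_sub, hP, transpose_one]
  have hRR : R * R = R := by
    rw [hR]; simp only [sub_mul, mul_sub, hPP, one_mul, mul_one]; abel
  have e : ∀ X Y : Matrix (Fin d) (Fin d) ℝ, Xᵀ = X → Yᵀ = Y → X * X = X → Y * Y = Y →
      ((X * N * Y)ᵀ * (X * N * Y)).trace = (X * N * Y * N).trace := by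
    intro X Y hX hY hXX hYY
    rw [transpose_mul, transpose_mul, hX, hY, hN]
    calc (Y * (N * X) * (X * N * Y)).trace = (Y * (N * (X * X) * N * Y)).trace := by
          simp only [Matrix.mul_assoc]
      _ = (N * X * N * Y).trace := by
          rw [hXX, trace_mul_comm, Matrix.mul_assoc _ Y Y, hYY]
      _ = (N * (X * N * Y)).trace := by simp only [Matrix.mul_assoc]
      _ = _ := by rw [trace_mul_comm]
  rw [fro2_eq, fro2_eq, e P P hP hP hPP hPP, hN]
  have h1 := hfro (P * N * R)
  have h2 := hfro (R * N * P)
  have h3 := hfro (R * N * R)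
  rw [e P R hP hRt hPP hRR] at h1
  rw [e R P hRt hP hRR hPP] at h2
  rw [e R R hRt hRt hRR hRR] at h3
  have hsum : N * N = P * N * P * N + P * N * R * N + R * N * P * N + R * N * R * N := by
    rw [hR]; noncomm_ring
  rw [hsum, trace_add, trace_add, trace_add]
  linarith

lemma trace_quad {d n : ℕ} (B : Matrix (Fin d) (Fin d) ℝ) (g : Matrix (Fin d) (Fin n) ℝ) :
    (gᵀ * B * g).trace = ∑ j, quad B (fun i => g i j) := by
  simp only [trace, diag]
  refine Finset.sum_congr rfl fun j _ => ?_
  rw [quad_eq, Matrix.mul_assoc]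
  rfl

/-- deterministic part -/
lemma det_part {d p n : ℕ} (hn : 0 < n) {A : Matrix (Fin d) (Fin d) ℝ} (hA : A.PosSemidef)
    (s q : Fin d → Fin p → ℝ) (hq : (Matrix.of q)ᵀ * Matrix.of q = 1)
    (hr : LinearMap.range (A * Matrix.of s).mulVecLin ≤ LinearMap.range (Matrix.of q).mulVecLin) :
    ∃ B : Fin d → Fin d → ℝ, (∀ i j, B i j = B j i) ∧
      fro2 B ≤ fro2 (nys p (fun j i => s i j) A) ∧
      ∀ g : Fin d → Fin n → ℝ, (n : ℝ) * (hutchppEst A q g - A.trace) =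
        ∑ j, (quad B (fun i => g i j) - dg B) := by
  set q' := Matrix.of q with hq'
  set P : Matrix (Fin d) (Fin d) ℝ := 1 - q' * q'ᵀ with hPd
  have hP : Pᵀ = P := by rw [hPd]; simp
  have hPq : P * q' = 0 := by
    rw [hPd, Matrix.sub_mul, Matrix.mul_assoc, hq]; simp
  have hPP : P * P = P := by
    conv_lhs => rw [hPd]
    rw [← hPd]
    have : P * (q' * q'ᵀ) = 0 := by rw [← Matrix.mul_assoc, hPq]; simp
    calc P * P = P * (1 - q' * q'ᵀ) := by rw [← hPd]
      _ = P := by rw [Matrix.mul_sub, this]; simp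
  have hPs : ∀ j, P *ᵥ (A *ᵥ (fun i => s i j)) = 0 := by
    intro j
    have h1 : A *ᵥ (fun i => s i j) ∈ LinearMap.range (A * Matrix.of s).mulVecLin := by
      refine ⟨Pi.single j 1, ?_⟩
      rw [mulVecLin_apply, ← mulVec_mulVec, mulVec_single_one]
      rfl
    obtain ⟨y, hy⟩ := hr h1
    rw [← hy, mulVecLin_apply, mulVec_mulVec, hPq, zero_mulVec]
  have hNP := nys_proj p (fun j i => s i j) A P hPs
  have hN := psd_transpose (nys_psd p (fun j i => s i j) A hA)
  have hBt : (P * A * P)ᵀ = P * A * P := by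
    rw [transpose_mul, transpose_mul, hP, psd_transpose hA, Matrix.mul_assoc]
  refine ⟨P * A * P, ?_, ?_, ?_⟩
  · intro i j
    conv_lhs => rw [← hBt, transpose_apply]
  · rw [← hNP]
    exact fro2_proj hP hPP hN
  · intro g
    have hn' : (n : ℝ) ≠ 0 := by positivity
    have htr : (q'ᵀ * A * q').trace + (P * A * P).trace = A.trace := by
      have h1 : (P * A * P).trace = (P * A).trace := by
        rw [trace_mul_comm, ← Matrix.mul_assoc, hPP]
      have h2 : (q'ᵀ * A * q').trace = (q' * q'ᵀ * A).trace := by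
        rw [trace_mul_comm, ← Matrix.mul_assoc]
      rw [h1, h2, ← trace_add, ← Matrix.add_mul, hPd]; simp
    have hG : ((Matrix.of g)ᵀ * P * A * P * Matrix.of g).trace =
        ∑ j, quad (P * A * P) (fun i => g i j) := by
      rw [show (Matrix.of g)ᵀ * P * A * P * Matrix.of g =
        (Matrix.of g)ᵀ * (P * A * P) * Matrix.of g by simp only [Matrix.mul_assoc], trace_quad]
      rfl
    rw [hutchppEst, hG, Finset.sum_sub_distrib, dg_eq, ← htr]
    simp only [Finset.sum_const, Finset.card_univ, Fintype.card_fin, nsmul_eq_mul]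
    field_simp
    ring

/-- uniform measure on a finite type -/
noncomputable def unif (α : Type*) [Fintype α] [MeasurableSpace α] : Measure α :=
  (Fintype.card α : ENNReal)⁻¹ • Measure.count

lemma unif_singleton {α : Type*} [Fintype α] [MeasurableSpace α] [MeasurableSingletonClass α]
    (a : α) : unif α {a} = (Fintype.card α : ENNReal)⁻¹ := by
  simp [unif]

instance {α : Type*} [Fintype α] [MeasurableSpace α] [Nonempty α] : IsFiniteMeasure (unif α) := by
  constructor
  rw [unif, Measure.smul_apply, smul_eq_mul]
  refine ENNReal.mul_lt_top ?_ (measure_lt_top _ _)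
  simp [Fintype.card_pos]

lemma unif_pi (n : ℕ) (α : Type*) [Fintype α] [MeasurableSpace α] [MeasurableSingletonClass α]
    [Nonempty α] : Measure.pi (fun _ : Fin n => unif α) = unif (Fin n → α) := by
  refine Measure.ext_of_singleton fun f => ?_
  rw [Measure.pi_singleton, unif_singleton]
  simp [unif_singleton, ENNReal.inv_pow]

lemma unif_prod (α β : Type*) [Fintype α] [MeasurableSpace α] [MeasurableSingletonClass α]
    [Nonempty α] [Fintype β] [MeasurableSpace β] [MeasurableSingletonClass β] [Nonempty β] :
    (unif α).prod (unif β) = unif (α × β) := by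
  refine Measure.ext_of_singleton fun f => ?_
  obtain ⟨a, b⟩ := f
  rw [← Set.singleton_prod_singleton, Measure.prod_prod, Set.singleton_prod_singleton,
    unif_singleton, unif_singleton, unif_singleton, Fintype.card_prod]
  push_cast
  rw [ENNReal.mul_inv] <;> simp

lemma rademacher_eq : rademacher = (unif Bool).map sg := by
  rw [unif, Measure.map_smul, Measure.count, Measure.sum_fintype]
  rw [Fintype.sum_bool, Measure.map_add _ _ (measurable_of_finite _),
    Measure.map_dirac' (measurable_of_finite _), Measure.map_dirac' (measurable_of_finite _)]
  simp [rademacher, sg, add_comm]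

noncomputable def sgm {d n : ℕ} (t : Fin d → Fin n → Bool) : Fin d → Fin n → ℝ :=
  fun i j => sg (t i j)

lemma radMeasure_eq (d n : ℕ) : radMeasure d n = (unif (Fin d → Fin n → Bool)).map sgm := by
  have h1 : (Measure.pi fun _ : Fin n => rademacher) =
      (unif (Fin n → Bool)).map (fun t i => sg (t i)) := by
    rw [← unif_pi, Measure.pi_map_pi fun i => (measurable_of_finite _).aemeasurable]
    simp only [rademacher_eq]
  rw [radMeasure, h1, ← unif_pi]
  rw [← Measure.pi_map_pi fun i => (measurable_of_finite _).aemeasurable]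
  rw [unif_pi, unif_pi]
  rfl

lemma unif_ge {α : Type*} [Fintype α] [Nonempty α] [MeasurableSpace α] [MeasurableSingletonClass α]
    (s : Set α) [DecidablePred (· ∈ s)] (δ : ℝ)
    (h : Ex (fun a => if a ∈ s then (0 : ℝ) else 1) ≤ δ) : ENNReal.ofReal (1 - δ) ≤ unif α s := by
  have h1 : Ex (fun a => if a ∈ s then (1 : ℝ) else 0) = 1 - Ex (fun a => if a ∈ s then (0 : ℝ) else 1) := by
    rw [← Ex_const (α := α) 1, ← Ex_sub]
    congr 1; funext a; rw [Ex_const]; split_ifs <;> simp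
  have h2 : unif α s = ENNReal.ofReal (Ex (fun a => if a ∈ s then (1 : ℝ) else 0)) := by
    have hs : s = ((Finset.univ.filter (· ∈ s) : Finset α) : Set α) := by ext; simp
    rw [unif, Measure.smul_apply, smul_eq_mul]
    conv_lhs => rw [hs]
    rw [Measure.count_apply_finset, Ex, Finset.sum_boole, ENNReal.ofReal_div_of_pos (by
      exact_mod_cast Fintype.card_pos), ENNReal.ofReal_natCast, ENNReal.ofReal_natCast, mul_comm,
      div_eq_mul_inv]
  rw [h2, h1]
  exact ENNReal.ofReal_le_ofReal (by linarith)


lemma Ex_swap {d n : ℕ} (f : (Fin n → Fin d → Bool) → ℝ) :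
    Ex (fun t : Fin d → Fin n → Bool => f (fun j i => t i j)) = Ex f :=
  Ex_equiv (Equiv.piComm (fun (_ : Fin d) (_ : Fin n) => Bool)) f

lemma final_S {d p : ℕ} {A : Matrix (Fin d) (Fin d) ℝ} (hA : A.PosSemidef) (hT : 0 < A.trace)
    (δ : ℝ) (h0 : 0 < δ) (h1 : δ < 1 / 2) (hp : 256000 * Real.log (1 / δ) ≤ p) (hp0 : (0 : ℝ) < p) :
    Ex (fun S : Fin p → Fin d → Bool =>
      if (16000 * A.trace / p) * A.trace ≤ fro2 (nys p (fun i => sv (S i)) A) then (1 : ℝ) else 0)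
      ≤ δ / 2 := by
  refine (nys_tail p A hA (16000 * A.trace / p) A.trace (by positivity) hT le_rfl).trans ?_
  have e1 : 80 / (16000 * A.trace / p) * A.trace = p / 200 := by field_simp; norm_num
  have e2 : ((99 : ℝ) / 100) ^ p ≤ Real.exp (-(p / 100)) := by
    have h := Real.one_sub_le_exp_neg (1 / 100)
    calc ((99 : ℝ) / 100) ^ p ≤ (Real.exp (-(1 / 100))) ^ p := by
          gcongr; linarith
      _ = _ := by rw [← Real.exp_nat_mul]; congr 1; ring
  rw [e1]
  have hlog : Real.log (1 / δ) = - Real.log δ := by rw [one_div, Real.log_inv]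
  have hlpos : 0 < Real.log (1 / δ) := Real.log_pos (by rw [lt_div_iff₀ h0]; linarith)
  calc Real.exp (p / 200) * (99 / 100) ^ p ≤ Real.exp (p / 200) * Real.exp (-(p / 100)) := by gcongr
    _ = Real.exp (-(p / 200)) := by rw [← Real.exp_add]; congr 1; ring
    _ ≤ Real.exp (Real.log δ + Real.log δ) := Real.exp_le_exp.2 (by linarith)
    _ = δ * δ := by rw [Real.exp_add, Real.exp_log h0]
    _ ≤ δ / 2 := by nlinarith

lemma final_G {d p n : ℕ} (B : Fin d → Fin d → ℝ) (hB : ∀ i j, B i j = B j i) (T : ℝ)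
    (hT : 0 < T) (hF : fro2 B ≤ (16000 * T / p) * T)
    (δ ε : ℝ) (h0 : 0 < δ) (h1 : δ < 1 / 2) (hε : 0 < ε)
    (hp1 : 256000 * (Real.sqrt (Real.log (1 / δ)) / ε) ≤ p)
    (hn1 : 256000 * (Real.sqrt (Real.log (1 / δ)) / ε) ≤ n)
    (hn : 256000 * Real.log (1 / δ) ≤ n) (hp0 : (0 : ℝ) < p) (hn0 : (0 : ℝ) < n) :
    Ex (fun G : Fin n → Fin d → Bool =>
      if n * (ε * T) ≤ |∑ j, (quad B (sv (G j)) - dg B)| then (1 : ℝ) else 0) ≤ δ / 2 := by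
  set L := Real.log (1 / δ) with hL
  have hlog : L = - Real.log δ := by rw [hL, one_div, Real.log_inv]
  have hlpos : 0 < L := Real.log_pos (by rw [lt_div_iff₀ h0]; linarith)
  set w := Real.sqrt (L * p / n) with hw
  have hw0 : 0 ≤ w := Real.sqrt_nonneg _
  have hw2 : w ^ 2 = L * p / n := Real.sq_sqrt (by positivity)
  have hcF : (w / T) ^ 2 * fro2 B ≤ 16000 * L / n := by
    calc (w / T) ^ 2 * fro2 B ≤ (w / T) ^ 2 * ((16000 * T / p) * T) := by gcongr
      _ = 16000 * L / n := by rw [div_pow, hw2]; field_simp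
  have hc16 : 16000 * L / n ≤ 1 / 16 := by
    rw [div_le_iff₀ hn0]; linarith
  refine (hutch_tail n B hB (w / T) (n * (ε * T)) (by positivity) (hcF.trans hc16)).trans ?_
  have e1 : w / T * (n * (ε * T)) = w * n * ε := by field_simp
  have e2 : 256000 * L ≤ w * n * ε := by
    have hsq : (256000 * L) ^ 2 ≤ (w * n * ε) ^ 2 := by
      have h3 : (256000 * (Real.sqrt L / ε)) * (256000 * (Real.sqrt L / ε)) ≤ p * n := by gcongr
      have h4 : (256000 * (Real.sqrt L / ε)) * (256000 * (Real.sqrt L / ε)) =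
          256000 ^ 2 * L / ε ^ 2 := by
        rw [show (256000 * (Real.sqrt L / ε)) * (256000 * (Real.sqrt L / ε)) =
          256000 ^ 2 * (Real.sqrt L) ^ 2 / ε ^ 2 by ring, Real.sq_sqrt hlpos.le]
      rw [h4, div_le_iff₀ (by positivity)] at h3
      have h5 : (w * n * ε) ^ 2 = L * (p * n * ε ^ 2) := by
        rw [mul_pow, mul_pow, hw2]; field_simp
      rw [h5]
      calc (256000 * L) ^ 2 = L * (256000 ^ 2 * L) := by ring
        _ ≤ _ := by gcongr
    exact (abs_le_of_sq_le_sq' hsq (by positivity)).2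
  have e3 : (n : ℝ) * (2 * ((w / T) ^ 2 * fro2 B)) ≤ 32000 * L := by
    calc (n : ℝ) * (2 * ((w / T) ^ 2 * fro2 B)) ≤ n * (2 * (16000 * L / n)) := by gcongr
      _ = _ := by field_simp; norm_num
  rw [e1]
  calc 2 * Real.exp (n * (2 * ((w / T) ^ 2 * fro2 B)) - w * n * ε)
      ≤ 2 * Real.exp (Real.log δ + Real.log δ + Real.log δ) := by
        gcongr; linarith
    _ = 2 * (δ * δ * δ) := by rw [Real.exp_add, Real.exp_add, Real.exp_log h0]
    _ ≤ δ / 2 := by nlinarith [mul_pos h0 h0]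

theorem stmt7 : ∃ C : ℝ, 0 < C ∧
    ∀ (d : ℕ) (A : Matrix (Fin d) (Fin d) ℝ) (δ ε : ℝ) (p ℓ : ℕ)
      (Q : (Fin d → Fin p → ℝ) → (Fin d → Fin p → ℝ)),
      A.PosSemidef → 0 < δ → δ < 1 / 2 → 0 < ε → ε < 1 →
      C * (Real.sqrt (Real.log (1 / δ)) / ε + Real.log (1 / δ)) ≤ (p : ℝ) →
      C * (Real.sqrt (Real.log (1 / δ)) / ε + Real.log (1 / δ)) ≤ (ℓ : ℝ) →
      Measurable Q →
      (∀ s, (Matrix.of (Q s))ᵀ * Matrix.of (Q s) = 1) →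
      (∀ s, LinearMap.range (A * Matrix.of s).mulVecLin ≤
        LinearMap.range (Matrix.of (Q s)).mulVecLin) →
      ENNReal.ofReal (1 - δ) ≤
        ((radMeasure d p).prod (radMeasure d ℓ))
          {ω | (1 - ε) * A.trace ≤ hutchppEst A (Q ω.1) ω.2 ∧
            hutchppEst A (Q ω.1) ω.2 ≤ (1 + ε) * A.trace} := by
  refine ⟨256000, by norm_num, ?_⟩
  intro d A δ ε p ℓ Q hA h0 h1 hε hε1 hp hl _ hQ hR
  classical
  rw [radMeasure_eq, radMeasure_eq, Measure.map_prod_map _ _ (measurable_of_finite _)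
    (measurable_of_finite _), unif_prod]
  refine le_trans ?_ (Measure.le_map_apply (measurable_of_finite _).aemeasurable _)
  apply unif_ge
  set L := Real.log (1 / δ) with hL
  have hlpos : 0 < L := Real.log_pos (by rw [lt_div_iff₀ h0]; linarith)
  have hsq : 0 ≤ Real.sqrt L / ε := by positivity
  have hp1 : 256000 * (Real.sqrt L / ε) ≤ p := by linarith
  have hp2 : 256000 * L ≤ p := by linarith
  have hl1 : 256000 * (Real.sqrt L / ε) ≤ ℓ := by linarith
  have hl2 : 256000 * L ≤ ℓ := by linarith
  have hp0 : (0 : ℝ) < p := by linarith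
  have hl0 : (0 : ℝ) < ℓ := by linarith
  rcases hA.trace_nonneg.eq_or_lt with hT | hT
  · have hA0 : A = 0 := hA.trace_eq_zero_iff.1 hT.symm
    refine (Ex_mono (g := fun _ => (0 : ℝ)) fun a => ?_).trans ?_
    · rw [if_pos]
      simp [hA0, hutchppEst]
    · rw [Ex_const]; exact h0.le
  · rw [Ex_prod]
    have key : ∀ S : Fin d → Fin p → Bool, (Ex fun G : Fin d → Fin ℓ → Bool =>
        if (S, G) ∈ Prod.map sgm sgm ⁻¹' {ω : (Fin d → Fin p → ℝ) × (Fin d → Fin ℓ → ℝ) |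
          (1 - ε) * A.trace ≤ hutchppEst A (Q ω.1) ω.2 ∧
            hutchppEst A (Q ω.1) ω.2 ≤ (1 + ε) * A.trace} then (0 : ℝ) else 1) ≤
        (if (16000 * A.trace / p) * A.trace ≤ fro2 (nys p (fun i => sv (fun k => S k i)) A)
          then (1 : ℝ) else 0) + δ / 2 := by
      intro S
      split_ifs with hS
      · refine (Ex_mono (g := fun _ => (1 : ℝ)) fun a => by split_ifs <;> norm_num).trans ?_
        rw [Ex_const]; linarith
      · push Not at hS
        rw [zero_add]
        obtain ⟨B, hBs, hBF, hBe⟩ := det_part (n := ℓ) (by exact_mod_cast hl0) hA (sgm S)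
          (Q (sgm S)) (hQ _) (hR _)
        have hF : fro2 B ≤ (16000 * A.trace / p) * A.trace := hBF.trans hS.le
        have hG := final_G B hBs A.trace hT hF δ ε h0 h1 hε hp1 hl1 hl2 hp0 hl0
        rw [← Ex_swap] at hG
        refine (Ex_mono fun G => ?_).trans hG
        have hg := hBe (sgm G)
        by_cases hb : (ℓ : ℝ) * (ε * A.trace) ≤ |∑ j, (quad B (sv (fun i => G i j)) - dg B)|
        · rw [if_pos hb]; split_ifs <;> norm_num
        · rw [if_neg hb, if_pos]
          push Not at hb
          have hb' : |(ℓ : ℝ) * (hutchppEst A (Q (sgm S)) (sgm G) - A.trace)| <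
            ℓ * (ε * A.trace) := by rw [hg]; exact hb
          rw [abs_mul, abs_of_pos hl0] at hb'
          have hb2 := abs_lt.1 (lt_of_mul_lt_mul_left hb' hl0.le)
          constructor
          · show _ ≤ hutchppEst A (Q (sgm S)) (sgm G)
            linarith [hb2.1]
          · show hutchppEst A (Q (sgm S)) (sgm G) ≤ _
            linarith [hb2.2]
    refine (Ex_mono key).trans ?_
    rw [Ex_add, Ex_const]
    have hS := final_S hA hT δ h0 h1 hp2 hp0
    rw [← Ex_swap] at hS
    linarith
end

section
/- Let m ≥ 18 be an integer with m ≡ 2 (mod 8), and set q = (m+2)/4 and ℓ = (m−2)/2. Let A ∈ ℝ^{d×d} be positive semidefinite. Let S ∈ ℝ^{d×q} be a random matrix with i.i.d. standard Gaussian N(0,1) entries and G ∈ ℝ^{d×ℓ} a random matrix with i.i.d. Rademacher entries, all entries jointly independent, and let ω ↦ Q(ω) ∈ ℝ^{d×q} be any measurable map such that for every outcome ω, Q(ω)ᵀQ(ω) = I_q and the column space of A·S(ω) is contained in the column space of Q(ω). Then the estimator X = tr(QᵀAQ) + (1/ℓ)·tr(Gᵀ(I − QQᵀ)A(I − QQᵀ)G)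 satisfies E[X] = tr(A) and Var[X] ≤ (16/(m−2)²)·tr(A)². -/
open MeasureTheory Matrix

/-- The law of a `d × n` random matrix with i.i.d. standard Gaussian entries
(as a product measure on `Fin d → Fin n → ℝ`). -/
noncomputable def gaussMeasure (d n : ℕ) : Measure (Fin d → Fin n → ℝ) :=
  Measure.pi fun _ => Measure.pi fun _ => ProbabilityTheory.gaussianReal 0 1

theorem gauss_moments :
    (∀ n : ℕ, Integrable (fun x : ℝ => x ^ n) (ProbabilityTheory.gaussianReal 0 1)) ∧
    (∫ x, x ^ 1 ∂(ProbabilityTheory.gaussianReal 0 1) = 0) ∧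
    (∫ x, x ^ 2 ∂(ProbabilityTheory.gaussianReal 0 1) = 1) ∧
    (∫ x, x ^ 3 ∂(ProbabilityTheory.gaussianReal 0 1) = 0) ∧
    (∫ x, x ^ 4 ∂(ProbabilityTheory.gaussianReal 0 1) = 3) := by
  have hInt0 : (0:ℝ) ∈ interior (ProbabilityTheory.integrableExpSet (fun x : ℝ => x)
      (ProbabilityTheory.gaussianReal 0 1)) := by simp
  have key : ∀ n : ℕ, ∫ x, x ^ n ∂(ProbabilityTheory.gaussianReal 0 1) =
      iteratedDeriv n (fun t : ℝ => Real.exp (t ^ 2 / 2)) 0 := by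
    intro n
    have := ProbabilityTheory.iteratedDeriv_mgf_zero hInt0 n
    rw [ProbabilityTheory.mgf_fun_id_gaussianReal] at this
    simp only [zero_mul, zero_add, NNReal.coe_one, one_mul] at this
    rw [this]; rfl
  have d0 : ∀ t : ℝ, HasDerivAt (fun t : ℝ => Real.exp (t ^ 2 / 2))
      (t * Real.exp (t ^ 2 / 2)) t := by
    intro t
    have := (((hasDerivAt_id t).pow 2).div_const 2).exp
    have h2 := this.congr_deriv (g' := t * Real.exp (t ^ 2 / 2)) (by
      simp only [Pi.pow_apply, id]; push_cast; ring)
    exact h2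
  have e1 : deriv (fun t : ℝ => Real.exp (t ^ 2 / 2)) = fun t => t * Real.exp (t ^ 2 / 2) := by
    ext t; exact (d0 t).deriv
  have e2 : deriv (fun t : ℝ => t * Real.exp (t ^ 2 / 2)) =
      fun t => (1 + t ^ 2) * Real.exp (t ^ 2 / 2) := by
    ext t
    have := ((hasDerivAt_id t).mul (d0 t)).deriv
    refine Eq.trans this ?_
    simp; ring
  have e3 : deriv (fun t : ℝ => (1 + t ^ 2) * Real.exp (t ^ 2 / 2)) =
      fun t => (3 * t + t ^ 3) * Real.exp (t ^ 2 / 2) := by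
    ext t
    have := ((((hasDerivAt_id t).pow 2).const_add 1).mul (d0 t)).deriv
    refine Eq.trans this ?_
    simp; ring
  have e4 : deriv (fun t : ℝ => (3 * t + t ^ 3) * Real.exp (t ^ 2 / 2)) =
      fun t => (3 + 6 * t ^ 2 + t ^ 4) * Real.exp (t ^ 2 / 2) := by
    ext t
    have := ((((hasDerivAt_id t).const_mul 3).add ((hasDerivAt_id t).pow 3)).mul (d0 t)).deriv
    refine Eq.trans this ?_
    simp; ring
  refine ⟨fun n => ?_, ?_, ?_, ?_, ?_⟩
  · exact ProbabilityTheory.integrable_pow_of_mem_interior_integrableExpSet hInt0 n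
  all_goals
    rw [key]
    simp only [iteratedDeriv_succ, iteratedDeriv_zero, e1, e2, e3, e4]
    simp

theorem rad_moments :
    (∀ n : ℕ, Integrable (fun x : ℝ => x ^ n) rademacher) ∧
    (∫ x, x ^ 1 ∂rademacher = 0) ∧
    (∫ x, x ^ 2 ∂rademacher = 1) ∧
    (∫ x, x ^ 3 ∂rademacher = 0) ∧
    (∫ x, x ^ 4 ∂rademacher = 1) := by
  have hi : ∀ (n : ℕ) (y : ℝ), Integrable (fun x : ℝ => x ^ n)
      (((1 : ENNReal) / 2) • Measure.dirac y) := by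
    intro n y
    refine Integrable.smul_measure ?_ (by simp)
    exact integrable_dirac (by simp)
  refine ⟨fun n => (hi n _).add_measure (hi n _), ?_, ?_, ?_, ?_⟩
  all_goals
    rw [rademacher, integral_add_measure (hi _ _) (hi _ _)]
    simp [integral_smul_measure]
  all_goals norm_num

section mom
variable {ι : Type*} [Fintype ι] [DecidableEq ι]

theorem mono_int (μ : Measure ℝ) [IsProbabilityMeasure μ]
    (hi : ∀ n : ℕ, Integrable (fun x : ℝ => x ^ n) μ) (f : ι → ℕ) :
    Integrable (fun x : ι → ℝ => ∏ i, x i ^ f i) (Measure.pi fun _ => μ) ∧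
    ∫ x : ι → ℝ, ∏ i, x i ^ f i ∂(Measure.pi fun _ => μ) = ∏ i, ∫ x, x ^ f i ∂μ :=
  ⟨Integrable.fintype_prod (f := fun i (x : ℝ) => x ^ f i) (fun i => hi (f i)),
   integral_fintype_prod_eq_prod (fun i (x : ℝ) => x ^ f i)⟩

theorem mom4 (μ : Measure ℝ) [IsProbabilityMeasure μ] (κ : ℝ)
    (hi : ∀ n : ℕ, Integrable (fun x : ℝ => x ^ n) μ)
    (h1 : ∫ x, x ^ 1 ∂μ = 0) (h2 : ∫ x, x ^ 2 ∂μ = 1) (h3 : ∫ x, x ^ 3 ∂μ = 0)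
    (h4 : ∫ x, x ^ 4 ∂μ = κ) (a b c d : ι) :
    Integrable (fun x : ι → ℝ => x a * x b * x c * x d) (Measure.pi fun _ => μ) ∧
    ∫ x : ι → ℝ, x a * x b * x c * x d ∂(Measure.pi fun _ => μ) =
      (if a = b then 1 else 0) * (if c = d then 1 else 0) +
      (if a = c then 1 else 0) * (if b = d then 1 else 0) +
      (if a = d then 1 else 0) * (if b = c then 1 else 0) +
      (κ - 3) * (if a = b ∧ a = c ∧ a = d then 1 else 0) := by
  have e : (fun x : ι → ℝ => x a * x b * x c * x d) = fun x : ι → ℝ => ∏ i, x i ^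
      ((if i = a then 1 else 0) + (if i = b then 1 else 0) + (if i = c then 1 else 0)
        + (if i = d then 1 else 0)) := by
    ext x
    simp only [pow_add, Finset.prod_mul_distrib, pow_ite, pow_one, pow_zero,
      Finset.prod_ite_eq', Finset.mem_univ, if_true]
  have := mono_int μ hi (fun i : ι => ((if i = a then 1 else 0) + (if i = b then 1 else 0) +
    (if i = c then 1 else 0) + (if i = d then 1 else 0)))
  refine ⟨e ▸ this.1, ?_⟩
  rw [e, this.2]
  have h0 : ∫ x : ℝ, x ^ 0 ∂μ = 1 := by simp
  by_cases hab : a = b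
  · subst hab
    by_cases hcd : c = d
    · subst hcd
      by_cases hac : a = c
      · subst hac
        rw [Finset.prod_eq_single a]
        · simp [h4]; ring
        · intro i _ hi; simp [hi]
        · simp
      · rw [Finset.prod_eq_one]
        · simp [hac]
        · intro i _
          by_cases h : i = a
          · subst h; simp [hac, h2]
          · by_cases h' : i = c
            · subst h'; simp [h, h2]
            · simp [h, h']
    · by_cases hac : a = c
      · subst hac
        rw [Finset.prod_eq_zero (Finset.mem_univ a)] <;> simp [hcd, h3]
      · by_cases had : a = d
        · subst had
          rw [Finset.prod_eq_zero (Finset.mem_univ a)] <;> simp [hcd, Ne.symm hcd, h3]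
        · rw [Finset.prod_eq_zero (Finset.mem_univ c)] <;> simp_all [Ne.symm hac]
  · by_cases hac : a = c
    · subst hac
      by_cases hbd : b = d
      · subst hbd
        rw [Finset.prod_eq_one]
        · simp [hab]
        · intro i _
          by_cases h : i = a
          · subst h; simp [hab, h2]
          · by_cases h' : i = b
            · subst h'; simp [h, h2]
            · simp [h, h']
      · rw [Finset.prod_eq_zero (Finset.mem_univ b)] <;> simp_all [Ne.symm hab]
    · by_cases had : a = d
      · subst had
        by_cases hbc : b = c
        · subst hbc
          rw [Finset.prod_eq_one]
          · simp [hab]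
          · intro i _
            by_cases h : i = a
            · subst h; simp [hab, h2]
            · by_cases h' : i = b
              · subst h'; simp [h, h2]
              · simp [h, h']
        · rw [Finset.prod_eq_zero (Finset.mem_univ b)] <;> simp_all [Ne.symm hab]
      · rw [Finset.prod_eq_zero (Finset.mem_univ a)] <;> simp_all

theorem mom2 (μ : Measure ℝ) [IsProbabilityMeasure μ]
    (hi : ∀ n : ℕ, Integrable (fun x : ℝ => x ^ n) μ)
    (h1 : ∫ x, x ^ 1 ∂μ = 0) (h2 : ∫ x, x ^ 2 ∂μ = 1) (a b : ι) :
    Integrable (fun x : ι → ℝ => x a * x b) (Measure.pi fun _ => μ) ∧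
    ∫ x : ι → ℝ, x a * x b ∂(Measure.pi fun _ => μ) = (if a = b then 1 else 0) := by
  have e : (fun x : ι → ℝ => x a * x b) = fun x : ι → ℝ => ∏ i, x i ^
      ((if i = a then 1 else 0) + (if i = b then 1 else 0)) := by
    ext x
    simp only [pow_add, Finset.prod_mul_distrib, pow_ite, pow_one, pow_zero,
      Finset.prod_ite_eq', Finset.mem_univ, if_true]
  have := mono_int μ hi (fun i : ι => ((if i = a then 1 else 0) + (if i = b then 1 else 0)))
  refine ⟨e ▸ this.1, ?_⟩
  rw [e, this.2]
  by_cases hab : a = b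
  · subst hab
    rw [Finset.prod_eq_single a]
    · simp [h2]
    · intro i _ hi; simp [hi]
    · simp
  · rw [Finset.prod_eq_zero (Finset.mem_univ a)] <;> simp_all

/-- quadratic form -/
theorem quad1 (μ : Measure ℝ) [IsProbabilityMeasure μ]
    (hi : ∀ n : ℕ, Integrable (fun x : ℝ => x ^ n) μ)
    (h1 : ∫ x, x ^ 1 ∂μ = 0) (h2 : ∫ x, x ^ 2 ∂μ = 1) (M : Matrix ι ι ℝ) :
    Integrable (fun x : ι → ℝ => ∑ a, ∑ b, M a b * (x a * x b)) (Measure.pi fun _ => μ) ∧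
    ∫ x : ι → ℝ, ∑ a, ∑ b, M a b * (x a * x b) ∂(Measure.pi fun _ => μ) = M.trace := by
  have hI : ∀ a b, Integrable (fun x : ι → ℝ => M a b * (x a * x b)) (Measure.pi fun _ => μ) :=
    fun a b => ((mom2 μ hi h1 h2 a b).1).const_mul _
  refine ⟨integrable_finsetSum _ fun a _ => integrable_finsetSum _ fun b _ => hI a b, ?_⟩
  rw [integral_finsetSum _ fun a _ => integrable_finsetSum _ fun b _ => hI a b]
  simp_rw [integral_finsetSum _ fun b _ => hI _ b, integral_const_mul,
    (mom2 μ hi h1 h2 _ _).2]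
  simp [Matrix.trace]

theorem quad2 (μ : Measure ℝ) [IsProbabilityMeasure μ] (κ : ℝ)
    (hi : ∀ n : ℕ, Integrable (fun x : ℝ => x ^ n) μ)
    (h1 : ∫ x, x ^ 1 ∂μ = 0) (h2 : ∫ x, x ^ 2 ∂μ = 1) (h3 : ∫ x, x ^ 3 ∂μ = 0)
    (h4 : ∫ x, x ^ 4 ∂μ = κ) (M N : Matrix ι ι ℝ) :
    Integrable (fun x : ι → ℝ => (∑ a, ∑ b, M a b * (x a * x b)) *
      (∑ a, ∑ b, N a b * (x a * x b))) (Measure.pi fun _ => μ) ∧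
    ∫ x : ι → ℝ, (∑ a, ∑ b, M a b * (x a * x b)) *
      (∑ a, ∑ b, N a b * (x a * x b)) ∂(Measure.pi fun _ => μ) =
      M.trace * N.trace + (∑ a, ∑ b, M a b * N a b) + (∑ a, ∑ b, M a b * N b a) +
        (κ - 3) * ∑ a, M a a * N a a := by
  have e : (fun x : ι → ℝ => (∑ a, ∑ b, M a b * (x a * x b)) *
      (∑ a, ∑ b, N a b * (x a * x b))) = fun x : ι → ℝ => ∑ a, ∑ b, ∑ c, ∑ d,
        (M a b * N c d) * (x a * x b * x c * x d) := by
    ext x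
    simp only [Finset.sum_mul]
    refine Finset.sum_congr rfl fun a _ => Finset.sum_congr rfl fun b _ => ?_
    simp only [Finset.mul_sum]
    refine Finset.sum_congr rfl fun c _ => Finset.sum_congr rfl fun d _ => ?_
    ring
  have hI : ∀ a b c d, Integrable (fun x : ι → ℝ => (M a b * N c d) * (x a * x b * x c * x d))
      (Measure.pi fun _ => μ) :=
    fun a b c d => ((mom4 μ κ hi h1 h2 h3 h4 a b c d).1).const_mul _
  have hI3 := fun a b c => integrable_finsetSum Finset.univ fun d _ => hI a b c d
  have hI2 := fun a b => integrable_finsetSum Finset.univ fun c _ => hI3 a b c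
  have hI1 := fun a => integrable_finsetSum Finset.univ fun b _ => hI2 a b
  rw [e]
  refine ⟨integrable_finsetSum Finset.univ fun a _ => hI1 a, ?_⟩
  rw [integral_finsetSum _ fun a _ => hI1 a]
  simp_rw [integral_finsetSum _ fun b _ => hI2 _ b, integral_finsetSum _ fun c _ => hI3 _ _ c,
    integral_finsetSum _ fun d _ => hI _ _ _ d, integral_const_mul,
    (mom4 μ κ hi h1 h2 h3 h4 _ _ _ _).2]
  simp only [mul_add, Finset.sum_add_distrib]
  congr 1
  · congr 1
    · congr 1
      · simp [Matrix.trace, Finset.sum_mul_sum]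
      · simp
    · simp
  · rw [Finset.mul_sum]
    refine Finset.sum_congr rfl fun a _ => ?_
    rw [Finset.sum_eq_single a, Finset.sum_eq_single a, Finset.sum_eq_single a]
    · simp; ring
    all_goals simp +contextual [eq_comm]

end mom


theorem spectral_real {d : ℕ} {R : Matrix (Fin d) (Fin d) ℝ} (hR : R.PosSemidef) :
    ∃ (U : Matrix (Fin d) (Fin d) ℝ) (l : Fin d → ℝ), Uᵀ * U = 1 ∧ (∀ i, 0 ≤ l i) ∧
      R = U * diagonal l * Uᵀ := by
  refine ⟨hR.1.eigenvectorUnitary, hR.1.eigenvalues, ?_, hR.eigenvalues_nonneg, ?_⟩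
  · have := Unitary.coe_star_mul_self hR.1.eigenvectorUnitary
    rwa [Matrix.star_eq_conjTranspose, conjTranspose_eq_transpose_of_trivial] at this
  · have := hR.1.spectral_theorem
    rw [Unitary.conjStarAlgAut_apply] at this
    rw [Matrix.star_eq_conjTranspose, conjTranspose_eq_transpose_of_trivial] at this
    exact this

/-- One Nystrom step. -/
noncomputable def stepM {d : ℕ} (R : Matrix (Fin d) (Fin d) ℝ) (s : Fin d → ℝ) :
    Matrix (Fin d) (Fin d) ℝ :=
  R - (s ⬝ᵥ R *ᵥ s)⁻¹ • vecMulVec (R *ᵥ s) (R *ᵥ s)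

theorem stepM_trace {d : ℕ} (R : Matrix (Fin d) (Fin d) ℝ) (s : Fin d → ℝ) :
    (stepM R s).trace = R.trace - (s ⬝ᵥ R *ᵥ s)⁻¹ * ((R *ᵥ s) ⬝ᵥ (R *ᵥ s)) := by
  simp [stepM, trace_sub, trace_smul, trace_vecMulVec]

theorem stepM_frob {d : ℕ} (R : Matrix (Fin d) (Fin d) ℝ) (hR : Rᵀ = R) (s : Fin d → ℝ) :
    (stepM R s * stepM R s).trace = (R * R).trace
      - 2 * ((s ⬝ᵥ R *ᵥ s)⁻¹ * ((R *ᵥ s) ⬝ᵥ R *ᵥ (R *ᵥ s)))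
      + ((s ⬝ᵥ R *ᵥ s)⁻¹ * ((R *ᵥ s) ⬝ᵥ (R *ᵥ s))) ^ 2 := by
  unfold stepM
  set y := (s ⬝ᵥ R *ᵥ s)⁻¹
  set v := R *ᵥ s
  have h1 : v ᵥ* R = R *ᵥ v := by rw [← mulVec_transpose, hR]
  simp only [sub_mul, mul_sub, trace_sub, smul_mul_assoc, mul_smul_comm, trace_smul, smul_eq_mul,
    mul_vecMulVec, vecMulVec_mul, trace_vecMulVec, h1, vecMulVec_mulVec, MulOpposite.smul_eq_mul_unop, MulOpposite.unop_op, smul_vecMulVec]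
  rw [dotProduct_comm (R *ᵥ v) v]
  ring


theorem qf_s9 {d : ℕ} (U : Matrix (Fin d) (Fin d) ℝ) (l x z : Fin d → ℝ) :
    x ⬝ᵥ (U * diagonal l * Uᵀ) *ᵥ z = ∑ i, l i * (Uᵀ *ᵥ x) i * (Uᵀ *ᵥ z) i := by
  rw [← mulVec_mulVec, ← mulVec_mulVec, dotProduct_mulVec, ← mulVec_transpose]
  simp only [dotProduct, mulVec_diagonal]
  exact Finset.sum_congr rfl fun i _ => by ring

theorem Ut_R {d : ℕ} (U : Matrix (Fin d) (Fin d) ℝ) (hU : Uᵀ * U = 1) (l z : Fin d → ℝ) (i : Fin d) :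
    (Uᵀ *ᵥ ((U * diagonal l * Uᵀ) *ᵥ z)) i = l i * (Uᵀ *ᵥ z) i := by
  rw [mulVec_mulVec, ← mul_assoc, ← mul_assoc, hU, one_mul, ← mulVec_mulVec, mulVec_diagonal]

theorem dot_U {d : ℕ} (U : Matrix (Fin d) (Fin d) ℝ) (hU : Uᵀ * U = 1) (x z : Fin d → ℝ) :
    x ⬝ᵥ z = ∑ i, (Uᵀ *ᵥ x) i * (Uᵀ *ᵥ z) i := by
  have hU' : U * Uᵀ = 1 := mul_eq_one_comm.mp hU
  have := qf_s9 U (fun _ => 1) x z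
  simpa [hU'] using this

theorem stepM_psd {d : ℕ} {R : Matrix (Fin d) (Fin d) ℝ} (hR : R.PosSemidef) (s : Fin d → ℝ) :
    (stepM R s).PosSemidef := by
  have hT : Rᵀ = R := by simpa [IsHermitian] using hR.1
  refine .of_dotProduct_mulVec_nonneg ?_ fun x => ?_
  · unfold IsHermitian stepM
    rw [conjTranspose_eq_transpose_of_trivial, transpose_sub, transpose_smul,
      transpose_vecMulVec, hT]
  · obtain ⟨U, l, hU, hl, rfl⟩ := spectral_real hR
    rw [star_trivial, stepM, sub_mulVec, smul_mulVec, vecMulVec_mulVec, dotProduct_sub,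
      dotProduct_smul]
    simp only [op_smul_eq_smul, dotProduct_smul, smul_eq_mul]
    rw [dotProduct_comm (_ *ᵥ s) x]
    rw [qf_s9, qf_s9, qf_s9]
    set a := Uᵀ *ᵥ x
    set b := Uᵀ *ᵥ s
    have cs : (∑ i, l i * a i * b i) ^ 2 ≤ (∑ i, l i * a i * a i) * (∑ i, l i * b i * b i) := by
      apply Finset.sum_sq_le_sum_mul_sum_of_sq_le_mul
      · intro i _; have := hl i; have := mul_self_nonneg (a i); rw [mul_assoc]; positivity
      · intro i _; have := hl i; have := mul_self_nonneg (b i); rw [mul_assoc]; positivity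
      · intro i _; exact le_of_eq (by ring)
    have h0 : 0 ≤ ∑ i, l i * a i * a i := Finset.sum_nonneg fun i _ => by
      have := hl i; have := mul_self_nonneg (a i); rw [mul_assoc]; positivity
    have h1 : 0 ≤ ∑ i, l i * b i * b i := Finset.sum_nonneg fun i _ => by
      have := hl i; have := mul_self_nonneg (b i); rw [mul_assoc]; positivity
    rcases h1.eq_or_lt with h | h
    · rw [← h]; simpa using h0
    · rw [sub_nonneg, inv_mul_le_iff₀ h]
      nlinarith

theorem trace_R {d : ℕ} (U : Matrix (Fin d) (Fin d) ℝ) (hU : Uᵀ * U = 1) (l : Fin d → ℝ) :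
    (U * diagonal l * Uᵀ).trace = ∑ i, l i := by
  rw [trace_mul_comm, ← mul_assoc, hU, one_mul, trace_diagonal]

theorem trace_RR {d : ℕ} (U : Matrix (Fin d) (Fin d) ℝ) (hU : Uᵀ * U = 1) (l : Fin d → ℝ) :
    ((U * diagonal l * Uᵀ) * (U * diagonal l * Uᵀ)).trace = ∑ i, l i ^ 2 := by
  have : (U * diagonal l * Uᵀ) * (U * diagonal l * Uᵀ) = U * diagonal (fun i => l i ^ 2) * Uᵀ := by
    calc _ = U * (diagonal l * (Uᵀ * U) * diagonal l) * Uᵀ := by simp only [mul_assoc]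
      _ = _ := by rw [hU, mul_one, diagonal_mul_diagonal]; simp only [pow_two]
  rw [this, trace_R U hU]

theorem frob_le_trace_sq {d : ℕ} {R : Matrix (Fin d) (Fin d) ℝ} (hR : R.PosSemidef) :
    (R * R).trace ≤ R.trace ^ 2 := by
  obtain ⟨U, l, hU, hl, rfl⟩ := spectral_real hR
  rw [trace_RR U hU, trace_R U hU]
  exact Finset.sum_sq_le_sq_sum_of_nonneg fun i _ => hl i

/-- Real-number core of the one-step inequality. -/
theorem core_ineq {d : ℕ} (l x : Fin d → ℝ) (hl : ∀ i, 0 ≤ l i) (al be F : ℝ) (ha : 0 ≤ al)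
    (hb : 0 ≤ be) :
    al * (F - 2 * ((∑ i, l i * x i ^ 2)⁻¹ * ∑ i, l i ^ 3 * x i ^ 2) +
      ((∑ i, l i * x i ^ 2)⁻¹ * ∑ i, l i ^ 2 * x i ^ 2) ^ 2) +
      be * ((∑ i, l i) - (∑ i, l i * x i ^ 2)⁻¹ * ∑ i, l i ^ 2 * x i ^ 2) ^ 2 ≤
    al * F + be * (∑ i, l i) ^ 2 - ∑ i, l i ^ 2 * ((al - be) * l i + 2 * be * (∑ i, l i)) *
      (2 / ((∑ i, l i) + 2 * l i) * x i ^ 2 -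
        (∑ i, l i * x i ^ 2) * x i ^ 2 / ((∑ i, l i) + 2 * l i) ^ 2) := by
  set T := ∑ i, l i with hT
  set Y := ∑ i, l i * x i ^ 2 with hY
  set p2 := ∑ i, l i ^ 2 * x i ^ 2 with hp2
  set p3 := ∑ i, l i ^ 3 * x i ^ 2 with hp3
  have hlT : ∀ i, l i ≤ T := fun i => Finset.single_le_sum (fun j _ => hl j) (Finset.mem_univ i)
  have hYn : ∀ i ∈ Finset.univ, 0 ≤ l i * x i ^ 2 := fun i _ => mul_nonneg (hl i) (sq_nonneg _)
  have hY0 : 0 ≤ Y := Finset.sum_nonneg hYn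
  have hp30 : 0 ≤ p3 := Finset.sum_nonneg fun i _ => mul_nonneg (pow_nonneg (hl i) 3) (sq_nonneg _)
  have cs : p2 ^ 2 ≤ Y * p3 := by
    apply Finset.sum_sq_le_sum_mul_sum_of_sq_le_mul
    · exact hYn
    · intro i _; exact mul_nonneg (pow_nonneg (hl i) 3) (sq_nonneg _)
    · intro i _; exact le_of_eq (by ring)
  have cs2 : (Y⁻¹ * p2) ^ 2 ≤ Y⁻¹ * p3 := by
    rcases hY0.eq_or_lt with h | h
    · rw [← h]; simp
    · rw [mul_pow, pow_two, mul_assoc]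
      apply mul_le_mul_of_nonneg_left _ (inv_nonneg.2 hY0)
      rw [inv_mul_le_iff₀ h]; exact cs
  have key : ∑ i, l i ^ 2 * ((al - be) * l i + 2 * be * T) *
      (2 / (T + 2 * l i) * x i ^ 2 - Y * x i ^ 2 / (T + 2 * l i) ^ 2) ≤
      (al - be) * (Y⁻¹ * p3) + 2 * be * T * (Y⁻¹ * p2) := by
    have e : (al - be) * (Y⁻¹ * p3) + 2 * be * T * (Y⁻¹ * p2) =
        ∑ i, l i * ((al - be) * l i + 2 * be * T) * (l i * x i ^ 2 * Y⁻¹) := by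
      rw [hp3, hp2]
      simp only [Finset.mul_sum]
      rw [← Finset.sum_add_distrib]
      exact Finset.sum_congr rfl fun i _ => by ring
    rw [e]
    refine Finset.sum_le_sum fun i _ => ?_
    have hco : 0 ≤ l i * ((al - be) * l i + 2 * be * T) := by
      apply mul_nonneg (hl i)
      have := mul_nonneg ha (hl i)
      have := mul_nonneg hb (hl i)
      have := mul_le_mul_of_nonneg_left (hlT i) hb
      nlinarith
    rw [show l i ^ 2 * ((al - be) * l i + 2 * be * T) *
      (2 / (T + 2 * l i) * x i ^ 2 - Y * x i ^ 2 / (T + 2 * l i) ^ 2) =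
      (l i * ((al - be) * l i + 2 * be * T)) * (l i * x i ^ 2 *
      (2 / (T + 2 * l i) - Y / (T + 2 * l i) ^ 2)) by ring]
    apply mul_le_mul_of_nonneg_left _ hco
    rcases hY0.eq_or_lt with h | h
    · have : l i * x i ^ 2 = 0 := (Finset.sum_eq_zero_iff_of_nonneg hYn).1 h.symm i (Finset.mem_univ i)
      rw [this]; simp
    · apply mul_le_mul_of_nonneg_left _ (hYn i (Finset.mem_univ i))
      rcases (add_nonneg ((hl i).trans (hlT i)) (mul_nonneg zero_le_two (hl i))).eq_or_lt with h' | h'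
      · rw [← h']; simpa using hY0
      · rw [div_sub_div _ _ h'.ne' (by positivity), inv_eq_one_div, div_le_div_iff₀ (by positivity) h]
        nlinarith [mul_nonneg h'.le (sq_nonneg (T + 2 * l i - Y))]
  have := mul_le_mul_of_nonneg_left cs2 ha
  have := mul_le_mul_of_nonneg_left cs2 hb
  nlinarith


theorem step_forms {d : ℕ} (U : Matrix (Fin d) (Fin d) ℝ) (hU : Uᵀ * U = 1) (l s : Fin d → ℝ) :
    (stepM (U * diagonal l * Uᵀ) s).trace = (∑ i, l i) -
      (∑ i, l i * (Uᵀ *ᵥ s) i ^ 2)⁻¹ * ∑ i, l i ^ 2 * (Uᵀ *ᵥ s) i ^ 2 ∧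
    (stepM (U * diagonal l * Uᵀ) s * stepM (U * diagonal l * Uᵀ) s).trace = (∑ i, l i ^ 2)
      - 2 * ((∑ i, l i * (Uᵀ *ᵥ s) i ^ 2)⁻¹ * ∑ i, l i ^ 3 * (Uᵀ *ᵥ s) i ^ 2)
      + ((∑ i, l i * (Uᵀ *ᵥ s) i ^ 2)⁻¹ * ∑ i, l i ^ 2 * (Uᵀ *ᵥ s) i ^ 2) ^ 2 := by
  have hs : (U * diagonal l * Uᵀ)ᵀ = U * diagonal l * Uᵀ := by
    simp [transpose_mul, mul_assoc]
  have e1 : s ⬝ᵥ (U * diagonal l * Uᵀ) *ᵥ s = ∑ i, l i * (Uᵀ *ᵥ s) i ^ 2 := by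
    rw [qf_s9]; exact Finset.sum_congr rfl fun i _ => by ring
  have e2 : ((U * diagonal l * Uᵀ) *ᵥ s) ⬝ᵥ ((U * diagonal l * Uᵀ) *ᵥ s) =
      ∑ i, l i ^ 2 * (Uᵀ *ᵥ s) i ^ 2 := by
    rw [dot_U U hU]; exact Finset.sum_congr rfl fun i _ => by rw [Ut_R U hU]; ring
  have e3 : ((U * diagonal l * Uᵀ) *ᵥ s) ⬝ᵥ (U * diagonal l * Uᵀ) *ᵥ
      ((U * diagonal l * Uᵀ) *ᵥ s) = ∑ i, l i ^ 3 * (Uᵀ *ᵥ s) i ^ 2 := by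
    rw [qf_s9]; exact Finset.sum_congr rfl fun i _ => by rw [Ut_R U hU]; ring
  rw [stepM_trace, stepM_frob _ hs, e1, e2, e3, trace_R U hU, trace_RR U hU]
  exact ⟨rfl, rfl⟩

theorem step_frob_le {d : ℕ} {R : Matrix (Fin d) (Fin d) ℝ} (hR : R.PosSemidef) (s : Fin d → ℝ) :
    (stepM R s * stepM R s).trace ≤ (R * R).trace := by
  obtain ⟨U, l, hU, hl, rfl⟩ := spectral_real hR
  rw [(step_forms U hU l s).2, trace_RR U hU]
  set x := Uᵀ *ᵥ s
  have hYn : ∀ i ∈ Finset.univ, 0 ≤ l i * x i ^ 2 := fun i _ => mul_nonneg (hl i) (sq_nonneg _)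
  have hY0 := Finset.sum_nonneg hYn
  have hp30 : 0 ≤ ∑ i, l i ^ 3 * x i ^ 2 :=
    Finset.sum_nonneg fun i _ => mul_nonneg (pow_nonneg (hl i) 3) (sq_nonneg _)
  have cs : (∑ i, l i ^ 2 * x i ^ 2) ^ 2 ≤ (∑ i, l i * x i ^ 2) * ∑ i, l i ^ 3 * x i ^ 2 := by
    apply Finset.sum_sq_le_sum_mul_sum_of_sq_le_mul
    · exact hYn
    · intro i _; exact mul_nonneg (pow_nonneg (hl i) 3) (sq_nonneg _)
    · intro i _; exact le_of_eq (by ring)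
  generalize (∑ i, l i * x i ^ 2) = Y at *
  generalize (∑ i, l i ^ 2 * x i ^ 2) = p2 at *
  generalize (∑ i, l i ^ 3 * x i ^ 2) = p3 at *
  have cs2 : (Y⁻¹ * p2) ^ 2 ≤ Y⁻¹ * p3 := by
    rcases hY0.eq_or_lt with h | h
    · rw [← h]; simp
    · rw [mul_pow, pow_two, mul_assoc]
      apply mul_le_mul_of_nonneg_left _ (inv_nonneg.2 hY0)
      rw [inv_mul_le_iff₀ h]; exact cs
  have : 0 ≤ Y⁻¹ * p3 := mul_nonneg (inv_nonneg.2 hY0) hp30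
  linarith

theorem frob_nonneg {d : ℕ} {R : Matrix (Fin d) (Fin d) ℝ} (hR : R.PosSemidef) :
    0 ≤ (R * R).trace := by
  obtain ⟨U, l, hU, hl, rfl⟩ := spectral_real hR
  rw [trace_RR U hU]
  exact Finset.sum_nonneg fun i _ => sq_nonneg _

theorem step_expect {d : ℕ} {R : Matrix (Fin d) (Fin d) ℝ} (hR : R.PosSemidef) (al be de : ℝ)
    (ha : 0 ≤ al) (hb : 0 ≤ be) (h1 : de ≤ 2 * be) (h2 : 3 * de ≤ al + be) :
    ∫ s : Fin d → ℝ, (al * (stepM R s * stepM R s).trace + be * (stepM R s).trace ^ 2)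
      ∂(Measure.pi fun _ => ProbabilityTheory.gaussianReal 0 1) ≤
    (al - de) * (R * R).trace + be * R.trace ^ 2 := by
  obtain ⟨gi, g1, g2, g3, g4⟩ := gauss_moments
  have hnn : ∀ s, 0 ≤ al * (stepM R s * stepM R s).trace + be * (stepM R s).trace ^ 2 := fun s =>
    add_nonneg (mul_nonneg ha (frob_nonneg (stepM_psd hR s))) (mul_nonneg hb (sq_nonneg _))
  obtain ⟨U, l, hU, hl, rfl⟩ := spectral_real hR
  set T := ∑ i, l i with hT
  set ν : Measure (Fin d → ℝ) := Measure.pi fun _ => ProbabilityTheory.gaussianReal 0 1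
  -- moments of x_i
  have ex : ∀ i, (fun s : Fin d → ℝ => (Uᵀ *ᵥ s) i ^ 2) =
      fun s => ∑ a, ∑ b, (vecMulVec (Uᵀ i) (Uᵀ i)) a b * (s a * s b) := by
    intro i; ext s
    simp only [mulVec, dotProduct, pow_two, Finset.sum_mul_sum, vecMulVec_apply]
    exact Finset.sum_congr rfl fun a _ => Finset.sum_congr rfl fun b _ => by ring
  have eY : ∀ s : Fin d → ℝ, (∑ i, l i * (Uᵀ *ᵥ s) i ^ 2) =
      ∑ a, ∑ b, (U * diagonal l * Uᵀ) a b * (s a * s b) := by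
    intro s
    rw [show (∑ i, l i * (Uᵀ *ᵥ s) i ^ 2) = s ⬝ᵥ (U * diagonal l * Uᵀ) *ᵥ s by
      rw [qf_s9]; exact Finset.sum_congr rfl fun i _ => by ring]
    simp only [mulVec, dotProduct, Finset.mul_sum]
    exact Finset.sum_congr rfl fun a _ => Finset.sum_congr rfl fun b _ => by ring
  have huu : ∀ i, Uᵀ i ⬝ᵥ Uᵀ i = 1 := by
    intro i
    have := congrFun (congrFun hU i) i
    rw [mul_apply] at this
    simpa [dotProduct] using this
  have huR : ∀ i, Uᵀ i ⬝ᵥ (U * diagonal l * Uᵀ) *ᵥ Uᵀ i = l i := by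
    intro i
    rw [qf_s9]
    have : ∀ j, (Uᵀ *ᵥ Uᵀ i) j = if j = i then 1 else 0 := by
      intro j
      have := congrFun (congrFun hU j) i
      rw [mul_apply, one_apply] at this
      simpa [mulVec, dotProduct] using this
    simp [this]
  have hs : (U * diagonal l * Uᵀ)ᵀ = U * diagonal l * Uᵀ := by
    simp [transpose_mul, mul_assoc]
  have m2 : ∀ i, Integrable (fun s : Fin d → ℝ => (Uᵀ *ᵥ s) i ^ 2) ν ∧
      ∫ s : Fin d → ℝ, (Uᵀ *ᵥ s) i ^ 2 ∂ν = 1 := by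
    intro i
    rw [ex i]
    have := quad1 (ProbabilityTheory.gaussianReal 0 1) gi g1 g2 (vecMulVec (Uᵀ i) (Uᵀ i))
    rw [trace_vecMulVec, huu] at this
    exact this
  have m4 : ∀ i, Integrable (fun s : Fin d → ℝ => (∑ i, l i * (Uᵀ *ᵥ s) i ^ 2) *
      (Uᵀ *ᵥ s) i ^ 2) ν ∧
      ∫ s : Fin d → ℝ, (∑ i, l i * (Uᵀ *ᵥ s) i ^ 2) * (Uᵀ *ᵥ s) i ^ 2 ∂ν = T + 2 * l i := by
    intro i
    have e : (fun s : Fin d → ℝ => (∑ i, l i * (Uᵀ *ᵥ s) i ^ 2) * (Uᵀ *ᵥ s) i ^ 2) =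
      fun s => (∑ a, ∑ b, (U * diagonal l * Uᵀ) a b * (s a * s b)) *
        ∑ a, ∑ b, (vecMulVec (Uᵀ i) (Uᵀ i)) a b * (s a * s b) := by
      ext s
      rw [eY s, ← congrFun (ex i) s]
    rw [e]
    have := quad2 (ProbabilityTheory.gaussianReal 0 1) 3 gi g1 g2 g3 g4 (U * diagonal l * Uᵀ)
      (vecMulVec (Uᵀ i) (Uᵀ i))
    refine ⟨this.1, this.2.trans ?_⟩
    have e1 : ∑ a, ∑ b, (U * diagonal l * Uᵀ) a b * (vecMulVec (Uᵀ i) (Uᵀ i)) a b = l i := by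
      rw [← huR i]
      simp only [mulVec, dotProduct, Finset.mul_sum, vecMulVec_apply]
      exact Finset.sum_congr rfl fun a _ => Finset.sum_congr rfl fun b _ => by ring
    have e2 : ∑ a, ∑ b, (U * diagonal l * Uᵀ) a b * (vecMulVec (Uᵀ i) (Uᵀ i)) b a = l i := by
      rw [← e1]
      refine Finset.sum_congr rfl fun a _ => Finset.sum_congr rfl fun b _ => ?_
      simp only [vecMulVec_apply]; ring
    rw [e1, e2, trace_R U hU, trace_vecMulVec, huu]
    ring
  -- the upper bound
  have hI : ∀ i, Integrable (fun s : Fin d → ℝ => l i ^ 2 * ((al - be) * l i + 2 * be * T) *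
      (2 / (T + 2 * l i) * (Uᵀ *ᵥ s) i ^ 2 -
        (∑ i, l i * (Uᵀ *ᵥ s) i ^ 2) * (Uᵀ *ᵥ s) i ^ 2 / (T + 2 * l i) ^ 2)) ν := fun i =>
    (((m2 i).1.const_mul _).sub ((m4 i).1.div_const _)).const_mul _
  have hIs := integrable_finsetSum Finset.univ fun i _ => hI i
  have hInt0 : ∀ i, ∫ s : Fin d → ℝ, l i ^ 2 * ((al - be) * l i + 2 * be * T) *
      (2 / (T + 2 * l i) * (Uᵀ *ᵥ s) i ^ 2 -
        (∑ i, l i * (Uᵀ *ᵥ s) i ^ 2) * (Uᵀ *ᵥ s) i ^ 2 / (T + 2 * l i) ^ 2) ∂ν =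
      l i ^ 2 * ((al - be) * l i + 2 * be * T) * (2 / (T + 2 * l i) -
        (T + 2 * l i) / (T + 2 * l i) ^ 2) := by
    intro i
    rw [integral_const_mul, integral_sub ((m2 i).1.const_mul _) ((m4 i).1.div_const _),
      integral_const_mul, integral_div, (m2 i).2, (m4 i).2, mul_one]
  calc _ ≤ ∫ s : Fin d → ℝ, (al * (∑ i, l i ^ 2) + be * T ^ 2 - ∑ i, l i ^ 2 *
          ((al - be) * l i + 2 * be * T) *
      (2 / (T + 2 * l i) * (Uᵀ *ᵥ s) i ^ 2 -
        (∑ i, l i * (Uᵀ *ᵥ s) i ^ 2) * (Uᵀ *ᵥ s) i ^ 2 / (T + 2 * l i) ^ 2)) ∂ν := by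
        refine integral_mono_of_nonneg (ae_of_all _ hnn) ((integrable_const _).sub hIs)
          (ae_of_all _ fun s => ?_)
        have := core_ineq l (Uᵀ *ᵥ s) hl al be (∑ i, l i ^ 2) ha hb
        simp only
        rw [(step_forms U hU l s).1, (step_forms U hU l s).2]
        exact this
    _ = al * (∑ i, l i ^ 2) + be * T ^ 2 - ∑ i, l i ^ 2 * ((al - be) * l i + 2 * be * T) *
          (2 / (T + 2 * l i) - (T + 2 * l i) / (T + 2 * l i) ^ 2) := by
        rw [integral_sub (integrable_const _) hIs, integral_finsetSum _ fun i _ => hI i]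
        simp only [hInt0]
        simp
    _ ≤ _ := by
        rw [trace_R U hU, trace_RR U hU]
        have : de * ∑ i, l i ^ 2 ≤ ∑ i, l i ^ 2 * ((al - be) * l i + 2 * be * T) *
          (2 / (T + 2 * l i) - (T + 2 * l i) / (T + 2 * l i) ^ 2) := by
          rw [Finset.mul_sum]
          refine Finset.sum_le_sum fun i _ => ?_
          have hlT : l i ≤ T := Finset.single_le_sum (fun j _ => hl j) (Finset.mem_univ i)
          rcases (hl i).eq_or_lt with h | h
          · rw [← h]; simp
          · have hc : 0 < T + 2 * l i := by linarith
            rw [mul_comm, mul_assoc]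
            apply mul_le_mul_of_nonneg_left _ (sq_nonneg _)
            rw [show 2 / (T + 2 * l i) - (T + 2 * l i) / (T + 2 * l i) ^ 2 = 1 / (T + 2 * l i) by
              field_simp; norm_num, mul_one_div, le_div_iff₀ hc]
            nlinarith [mul_nonneg (sub_nonneg.2 h1) (sub_nonneg.2 hlT),
              mul_nonneg (sub_nonneg.2 h2) h.le]
        linarith


theorem mp_uncurry {ι κ : Type} [Fintype ι] [Fintype κ] (μ : Measure ℝ) [IsProbabilityMeasure μ] :
    MeasurePreserving (fun (x : ι → κ → ℝ) (p : ι × κ) => x p.1 p.2)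
      (Measure.pi fun _ : ι => Measure.pi fun _ : κ => μ) (Measure.pi fun _ : ι × κ => μ) := by
  refine ⟨by fun_prop, ?_⟩
  have := Measure.infinitePi_map_curry_symm (ι := ι) (κ := κ) (fun _ _ => μ)
  simp only [Measure.infinitePi_eq_pi] at this
  exact this

theorem mp_curry {ι κ : Type} [Fintype ι] [Fintype κ] (μ : Measure ℝ) [IsProbabilityMeasure μ] :
    MeasurePreserving (fun (x : ι × κ → ℝ) (i : ι) (j : κ) => x (i, j))
      (Measure.pi fun _ : ι × κ => μ) (Measure.pi fun _ : ι => Measure.pi fun _ : κ => μ) := by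
  refine ⟨by fun_prop, ?_⟩
  have := Measure.infinitePi_map_curry (ι := ι) (κ := κ) (fun _ _ => μ)
  simp only [Measure.infinitePi_eq_pi] at this
  exact this

theorem mp_swap {ι κ : Type} [Fintype ι] [Fintype κ] (μ : Measure ℝ) [IsProbabilityMeasure μ] :
    MeasurePreserving (fun (x : ι → κ → ℝ) (j : κ) (i : ι) => x i j)
      (Measure.pi fun _ : ι => Measure.pi fun _ : κ => μ)
      (Measure.pi fun _ : κ => Measure.pi fun _ : ι => μ) := by
  have h1 := mp_uncurry (ι := ι) (κ := κ) μ
  have h2 := measurePreserving_piCongrLeft (fun _ : κ × ι => μ) (Equiv.prodComm ι κ)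
  have h3 := mp_curry (ι := κ) (κ := ι) μ
  have := h3.comp (h2.comp h1)
  convert this using 1
  ext x j i
  simp only [Function.comp_apply]
  exact (Equiv.piCongrLeft_apply_apply (fun _ : κ × ι => ℝ) (Equiv.prodComm ι κ)
    (fun p : ι × κ => x p.1 p.2) (i, j)).symm

/-- Iterated Nystrom residual. -/
noncomputable def resid {d : ℕ} : (n : ℕ) → Matrix (Fin d) (Fin d) ℝ → (Fin n → Fin d → ℝ) →
    Matrix (Fin d) (Fin d) ℝ
  | 0, R, _ => R
  | n + 1, R, s => resid n (stepM R (s 0)) (fun j => s j.succ)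

theorem stepM_meas {d : ℕ} {α : Type*} [MeasurableSpace α] {f : α → Matrix (Fin d) (Fin d) ℝ}
    {g : α → Fin d → ℝ} (hf : ∀ i j, Measurable fun a => f a i j) (hg : Measurable g) :
    ∀ i j, Measurable fun a => stepM (f a) (g a) i j := by
  intro i j
  simp only [stepM, Matrix.sub_apply, Matrix.smul_apply, vecMulVec_apply, mulVec, dotProduct, smul_eq_mul]
  fun_prop

theorem resid_meas {d : ℕ} (n : ℕ) : ∀ {α : Type} [MeasurableSpace α]
    {f : α → Matrix (Fin d) (Fin d) ℝ}
    {g : α → Fin n → Fin d → ℝ} (_ : ∀ i j, Measurable fun a => f a i j) (_ : Measurable g),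
    ∀ i j, Measurable fun a => resid n (f a) (g a) i j := by
  induction n with
  | zero => intro α _ f g hf hg i j; exact hf i j
  | succ n ih =>
    intro α _ f g hf hg
    exact ih (f := fun a => stepM (f a) (g a 0)) (g := fun a j => g a j.succ)
      (stepM_meas hf (by fun_prop)) (by fun_prop)

theorem frob_meas {d : ℕ} {α : Type*} [MeasurableSpace α] {f : α → Matrix (Fin d) (Fin d) ℝ}
    (hf : ∀ i j, Measurable fun a => f a i j) : Measurable fun a => (f a * f a).trace := by
  simp only [trace, diag, mul_apply]
  fun_prop

theorem resid_psd {d : ℕ} (n : ℕ) : ∀ {R : Matrix (Fin d) (Fin d) ℝ} (_ : R.PosSemidef)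
    (s : Fin n → Fin d → ℝ), (resid n R s).PosSemidef ∧
      (resid n R s * resid n R s).trace ≤ (R * R).trace := by
  induction n with
  | zero => intro R hR s; exact ⟨hR, le_refl _⟩
  | succ n ih =>
    intro R hR s
    have := ih (stepM_psd hR (s 0)) (fun j => s j.succ)
    exact ⟨this.1, this.2.trans (step_frob_le hR _)⟩

theorem step_trace_le {d : ℕ} {R : Matrix (Fin d) (Fin d) ℝ} (hR : R.PosSemidef) (s : Fin d → ℝ) :
    0 ≤ (stepM R s).trace ∧ (stepM R s).trace ≤ R.trace := by
  refine ⟨(stepM_psd hR s).trace_nonneg, ?_⟩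
  rw [stepM_trace]
  have h1 : 0 ≤ s ⬝ᵥ R *ᵥ s := by simpa using hR.dotProduct_mulVec_nonneg s
  have h2 : 0 ≤ (R *ᵥ s) ⬝ᵥ (R *ᵥ s) := Finset.sum_nonneg fun i _ => mul_self_nonneg _
  have := mul_nonneg (inv_nonneg.2 h1) h2
  linarith

theorem resid_expect {d : ℕ} (al : ℕ → ℝ) (be : ℝ) (hb : 0 ≤ be) (h0 : al 0 = 1) (n : ℕ)
    (ha : ∀ k < n, 0 ≤ al k) (h1 : ∀ k < n, al k - al (k + 1) ≤ 2 * be)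
    (h2 : ∀ k < n, 3 * (al k - al (k + 1)) ≤ al k + be) :
    ∀ {R : Matrix (Fin d) (Fin d) ℝ} (_ : R.PosSemidef),
    ∫ s : Fin n → Fin d → ℝ, (resid n R s * resid n R s).trace
      ∂(Measure.pi fun _ => Measure.pi fun _ => ProbabilityTheory.gaussianReal 0 1) ≤
    al n * (R * R).trace + be * R.trace ^ 2 := by
  induction n with
  | zero =>
    intro R hR
    simp only [resid, h0, integral_const, smul_eq_mul, probReal_univ]
    have := mul_nonneg hb (sq_nonneg R.trace)
    linarith
  | succ n ih =>
    intro R hR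
    have ih' := @ih (fun k hk => ha k (by omega)) (fun k hk => h1 k (by omega))
      (fun k hk => h2 k (by omega))
    set γ : Measure (Fin d → ℝ) := Measure.pi fun _ => ProbabilityTheory.gaussianReal 0 1 with hγ
    have mp := measurePreserving_piFinSuccAbove (n := n) (fun _ => γ) 0
    have e : ∫ s : Fin (n + 1) → Fin d → ℝ, (resid (n + 1) R s * resid (n + 1) R s).trace
        ∂(Measure.pi fun _ => γ) =
        ∫ p : (Fin d → ℝ) × (Fin n → Fin d → ℝ), (resid n (stepM R p.1) p.2 *
          resid n (stepM R p.1) p.2).trace ∂(γ.prod (Measure.pi fun _ => γ)) := by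
      rw [← mp.integral_comp']
      rfl
    rw [e]
    have hm : Measurable fun p : (Fin d → ℝ) × (Fin n → Fin d → ℝ) =>
        (resid n (stepM R p.1) p.2 * resid n (stepM R p.1) p.2).trace := by
      apply frob_meas
      exact resid_meas n (stepM_meas (fun i j => measurable_const) measurable_fst) measurable_snd
    have hInt0 : Integrable (fun p : (Fin d → ℝ) × (Fin n → Fin d → ℝ) =>
        (resid n (stepM R p.1) p.2 * resid n (stepM R p.1) p.2).trace)
        (γ.prod (Measure.pi fun _ => γ)) := by
      refine Integrable.of_bound hm.aestronglyMeasurable (R * R).trace (ae_of_all _ fun p => ?_)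
      have h := resid_psd n (stepM_psd hR p.1) p.2
      rw [Real.norm_of_nonneg (frob_nonneg h.1)]
      exact h.2.trans (step_frob_le hR _)
    rw [integral_prod _ hInt0]
    refine le_trans ?_ ((step_expect hR (al n) be (al n - al (n + 1)) (ha n (by omega)) hb
      (h1 n (by omega)) (h2 n (by omega))).trans (le_of_eq (by ring)))
    refine integral_mono_of_nonneg (ae_of_all _ fun s => ?_) ?_ (ae_of_all _ fun s => ?_)
    · exact integral_nonneg fun r => frob_nonneg (resid_psd n (stepM_psd hR s) r).1
    · have hsm := stepM_meas (d := d) (f := fun _ : Fin d → ℝ => R) (g := fun s => s)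
        (fun i j => measurable_const) measurable_id
      refine Integrable.add (Integrable.const_mul ?_ _) (Integrable.const_mul ?_ _)
      · refine Integrable.of_bound (frob_meas hsm).aestronglyMeasurable (R * R).trace
          (ae_of_all _ fun s => ?_)
        rw [Real.norm_of_nonneg (frob_nonneg (stepM_psd hR s))]
        exact step_frob_le hR s
      · refine Integrable.of_bound (Measurable.aestronglyMeasurable ?_) (R.trace ^ 2)
          (ae_of_all _ fun s => ?_)
        · simp only [trace, diag]; fun_prop
        · rw [Real.norm_of_nonneg (sq_nonneg _)]
          exact pow_le_pow_left₀ (step_trace_le hR s).1 (step_trace_le hR s).2 2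
    · exact ih' (stepM_psd hR s)

/-- Final numeric bound after `q` steps. -/
theorem resid_bound {d q : ℕ} (hq : 5 ≤ q) {R : Matrix (Fin d) (Fin d) ℝ} (hR : R.PosSemidef) :
    ∫ s : Fin q → Fin d → ℝ, (resid q R s * resid q R s).trace
      ∂(Measure.pi fun _ => Measure.pi fun _ => ProbabilityTheory.gaussianReal 0 1) ≤
    R.trace ^ 2 / ((q : ℝ) - 1) := by
  obtain ⟨p, rfl⟩ : ∃ p, q = p + 2 := ⟨q - 2, by omega⟩
  have hp : (3 : ℝ) ≤ p := by exact_mod_cast (by omega : 3 ≤ p)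
  set δ : ℝ := 1 / (p + 3 / 2) with hδ
  have hδ0 : 0 < δ := by positivity
  have hδp : δ * (p + 3 / 2) = 1 := by rw [hδ]; field_simp
  let al : ℕ → ℝ := fun k => if k ≤ p then 1 - k * δ else if k = p + 1 then 5 / 6 * δ
    else 7 / 18 * δ
  have hlt : ∀ k, k ≤ p → al k = 1 - k * δ := fun k hk => by simp [al, hk]
  have hp0 : al p = 3 / 2 * δ := by rw [hlt p le_rfl]; linarith
  have hp1 : al (p + 1) = 5 / 6 * δ := by simp [al]
  have hp2 : al (p + 2) = 7 / 18 * δ := by simp [al]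
  have hbig : ∀ k, k < p → 1 - k * δ ≥ 5 / 2 * δ := by
    intro k hk
    have : (k : ℝ) + 1 ≤ p := by exact_mod_cast hk
    nlinarith
  have hdiff : ∀ k, k < p → al k - al (k + 1) = δ := by
    intro k hk
    rw [hlt k hk.le, hlt (k + 1) hk]; push_cast; ring
  have cases3 : ∀ k < p + 2, k < p ∨ k = p ∨ k = p + 1 := by omega
  have main := resid_expect (d := d) al (δ / 2) (by positivity) (by simp [al]) (p + 2)
    (by
      intro k hk
      rcases cases3 k hk with h | rfl | rfl
      · rw [hlt k h.le]; linarith [hbig k h]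
      · rw [hp0]; positivity
      · rw [hp1]; positivity)
    (by
      intro k hk
      rcases cases3 k hk with h | rfl | rfl
      · rw [hdiff k h]; linarith
      · rw [hp0, hp1]; linarith
      · rw [hp1, hp2]; linarith)
    (by
      intro k hk
      rcases cases3 k hk with h | rfl | rfl
      · rw [hdiff k h, hlt k h.le]; linarith [hbig k h]
      · rw [hp0, hp1]; linarith
      · rw [hp1, hp2]; linarith) hR
  refine main.trans ?_
  rw [hp2]
  have h1 := mul_le_mul_of_nonneg_left (frob_le_trace_sq hR) (by positivity : 0 ≤ 7 / 18 * δ)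
  have h2 : 8 / 9 * δ ≤ 1 / (((p + 2 : ℕ) : ℝ) - 1) := by
    push_cast
    rw [le_div_iff₀ (by linarith)]
    nlinarith
  have h3 := mul_le_mul_of_nonneg_right h2 (sq_nonneg R.trace)
  rw [one_div_mul_eq_div] at h3
  linarith


theorem resid_inv {d : ℕ} (n : ℕ) (N : Matrix (Fin d) (Fin d) ℝ) :
    ∀ (R : Matrix (Fin d) (Fin d) ℝ) (s : Fin n → Fin d → ℝ),
    (∀ j, (N * R) *ᵥ s j = 0) → N * resid n R s = N * R := by
  induction n with
  | zero => intro R s _; rfl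
  | succ n ih =>
    intro R s h
    have h0 : N * stepM R (s 0) = N * R := by
      have : N *ᵥ (R *ᵥ s 0) = 0 := by rw [mulVec_mulVec]; exact h 0
      rw [stepM, mul_sub, mul_smul_comm, mul_vecMulVec, this]
      simp
    change N * resid n (stepM R (s 0)) (fun j => s j.succ) = _
    rw [ih _ _ (fun j => by rw [h0]; exact h j.succ), h0]

theorem frob_eq {d : ℕ} (M : Matrix (Fin d) (Fin d) ℝ) :
    0 ≤ (Mᵀ * M).trace := by
  simp only [trace, diag, mul_apply, transpose_apply]
  exact Finset.sum_nonneg fun i _ => Finset.sum_nonneg fun j _ => mul_self_nonneg _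

/-- Compression by a projection decreases the Frobenius norm. -/
theorem proj_frob {d : ℕ} (N R : Matrix (Fin d) (Fin d) ℝ) (hN : Nᵀ = N) (hNN : N * N = N)
    (hR : Rᵀ = R) : ((N * R * N) * (N * R * N)).trace ≤ (R * R).trace := by
  have e1 : ((N * R * N) * (N * R * N)).trace = (N * R * (N * R)).trace := by
    have : (N * R * N) * (N * R * N) = (N * R * (N * R)) * N := by
      rw [show (N * R * N) * (N * R * N) = N * R * (N * N) * R * N by simp only [mul_assoc], hNN]
      simp only [mul_assoc]
    rw [this, trace_mul_comm, show N * (N * R * (N * R)) = N * N * (R * (N * R)) by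
      simp only [mul_assoc], hNN]
    simp only [mul_assoc]
  have h1 := frob_eq ((1 - N) * R)
  have h2 := frob_eq ((1 - N) * R * N)
  have hP : (1 - N)ᵀ * (1 - N) = 1 - N := by
    rw [transpose_sub, hN, transpose_one, sub_mul, mul_sub, mul_sub, hNN]; simp
  have e3 : (((1 - N) * R)ᵀ * ((1 - N) * R)).trace = (R * R).trace - (R * N * R).trace := by
    rw [transpose_mul, hR, show R * (1 - N)ᵀ * ((1 - N) * R) = R * ((1 - N)ᵀ * (1 - N)) * R by
      simp only [mul_assoc], hP, mul_sub, sub_mul, trace_sub]; simp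
  have e4 : (((1 - N) * R * N)ᵀ * ((1 - N) * R * N)).trace
      = (R * N * R).trace - (N * R * (N * R)).trace := by
    rw [transpose_mul, transpose_mul, hR, hN,
      show N * (R * (1 - N)ᵀ) * ((1 - N) * R * N) = N * (R * ((1 - N)ᵀ * (1 - N)) * R * N) by
      simp only [mul_assoc], hP, trace_mul_comm, mul_assoc _ N N, hNN, mul_sub, sub_mul, sub_mul,
      trace_sub, mul_one]
    rw [show R * N * R * N = R * (N * R * N) by simp only [mul_assoc], trace_mul_comm R,
      mul_assoc (N * R) N R, mul_assoc R R N, trace_mul_comm R (R * N)]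
  rw [e1]; linarith

theorem proj_main {d q : ℕ} {A : Matrix (Fin d) (Fin d) ℝ} (hA : A.PosSemidef)
    (Q S : Matrix (Fin d) (Fin q) ℝ) (hQ : Qᵀ * Q = 1)
    (h : LinearMap.range (A * S).mulVecLin ≤ LinearMap.range Q.mulVecLin) :
    let N := 1 - Q * Qᵀ
    ((N * A * N) * (N * A * N)).trace ≤
      (resid q A (fun j i => S i j) * resid q A (fun j i => S i j)).trace := by
  intro N
  have hNQ : N * Q = 0 := by
    simp only [N]; rw [Matrix.sub_mul, Matrix.mul_assoc, hQ]; simp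
  have hN : Nᵀ = N := by simp [N, transpose_sub]
  have hNN : N * N = N := by
    conv_lhs => rhs; simp only [N]
    rw [mul_sub, ← Matrix.mul_assoc, hNQ]; simp
  have hker : ∀ j, (N * A) *ᵥ (fun i => S i j) = 0 := by
    intro j
    have hm : (A * S) *ᵥ (Pi.single j 1) ∈ LinearMap.range Q.mulVecLin :=
      h ⟨Pi.single j 1, rfl⟩
    obtain ⟨y, hy⟩ := hm
    have hS : S *ᵥ (Pi.single j 1) = fun i => S i j := by
      ext i; simp
    rw [← hS, mulVec_mulVec, Matrix.mul_assoc, ← mulVec_mulVec, ← hy]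
    simp [mulVecLin_apply, mulVec_mulVec, hNQ]
  have e := resid_inv q N A (fun j i => S i j) hker
  have hp := (resid_psd q hA (fun j i => S i j)).1
  have hT : (resid q A (fun j i => S i j))ᵀ = resid q A (fun j i => S i j) := by
    simpa [IsHermitian] using hp.1
  have := proj_frob N _ hN hNN hT
  rwa [e] at this


/-- Block matrix `B ⊗ 1`. -/
def blk {d l : ℕ} (B : Matrix (Fin d) (Fin d) ℝ) :
    Matrix (Fin d × Fin l) (Fin d × Fin l) ℝ :=
  fun p p' => if p.2 = p'.2 then B p.1 p'.1 else 0

theorem blk_form {d l : ℕ} (B : Matrix (Fin d) (Fin d) ℝ) (g : Fin d → Fin l → ℝ) :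
    ((Matrix.of g)ᵀ * B * Matrix.of g).trace =
    ∑ a : Fin d × Fin l, ∑ b : Fin d × Fin l, blk B a b * (g a.1 a.2 * g b.1 b.2) := by
  simp only [Fintype.sum_prod_type, blk, trace, diag, mul_apply, transpose_apply, of_apply,
    ite_mul, zero_mul, Finset.sum_ite_eq, Finset.mem_univ, if_true, Finset.sum_mul]
  rw [Finset.sum_comm]
  rw [Finset.sum_congr rfl fun i _ => Finset.sum_comm]
  rw [Finset.sum_comm]
  refine Finset.sum_congr rfl fun i _ => ?_
  rw [Finset.sum_comm]
  refine Finset.sum_congr rfl fun j _ => Finset.sum_congr rfl fun k _ => by ring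

theorem rad_quad {d l : ℕ} {B : Matrix (Fin d) (Fin d) ℝ} (hB : Bᵀ = B) :
    Integrable (fun g => ((Matrix.of g)ᵀ * B * Matrix.of g).trace) (radMeasure d l) ∧
    ∫ g, ((Matrix.of g)ᵀ * B * Matrix.of g).trace ∂(radMeasure d l) = l * B.trace ∧
    Integrable (fun g => ((Matrix.of g)ᵀ * B * Matrix.of g).trace ^ 2) (radMeasure d l) ∧
    ∫ g, ((Matrix.of g)ᵀ * B * Matrix.of g).trace ^ 2 ∂(radMeasure d l) ≤
      (l * B.trace) ^ 2 + 2 * l * (B * B).trace := by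
  obtain ⟨hi, h1, h2, h3, h4⟩ := rad_moments
  have mp := mp_uncurry (ι := Fin d) (κ := Fin l) rademacher
  have q1 := quad1 rademacher hi h1 h2 (blk (l := l) B)
  have q2 := quad2 rademacher 1 hi h1 h2 h3 h4 (blk (l := l) B) (blk (l := l) B)
  have htr : (blk (l := l) B).trace = l * B.trace := by
    simp [trace, blk, Fintype.sum_prod_type, Finset.mul_sum]
  have hs1 : ∑ a, ∑ b, blk (l := l) B a b * blk (l := l) B b a = l * (B * B).trace := by
    simp only [Fintype.sum_prod_type, blk, trace, diag, mul_apply, eq_comm,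
      ite_mul, zero_mul, mul_ite, mul_zero, Finset.sum_ite_eq, Finset.mem_univ, if_true]
    simp [Finset.mul_sum]
  have hs2 : ∑ a, ∑ b, blk (l := l) B a b * blk (l := l) B a b = l * (B * B).trace := by
    rw [← hs1]
    refine Finset.sum_congr rfl fun a _ => Finset.sum_congr rfl fun b _ => ?_
    congr 1
    simp only [blk, eq_comm]
    rw [show B a.1 b.1 = B b.1 a.1 by conv_lhs => rw [← hB, transpose_apply]]
  have hs3 : 0 ≤ ∑ a, blk (l := l) B a a * blk (l := l) B a a :=
    Finset.sum_nonneg fun a _ => mul_self_nonneg _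
  have me := mp.aemeasurable
  simp only [blk_form, pow_two]
  have tr : ∀ f : (Fin d × Fin l → ℝ) → ℝ, Integrable f (Measure.pi fun _ => rademacher) →
      Integrable (fun g : Fin d → Fin l → ℝ => f (fun p => g p.1 p.2)) (radMeasure d l) ∧
      ∫ g : Fin d → Fin l → ℝ, f (fun p => g p.1 p.2) ∂(radMeasure d l) =
        ∫ x, f x ∂(Measure.pi fun _ => rademacher) := by
    intro f hf
    refine ⟨mp.integrable_comp_of_integrable hf, ?_⟩
    rw [← mp.map_eq, integral_map me (by rw [mp.map_eq]; exact hf.1)]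
    rfl
  have t1 := tr _ q1.1
  have t2 := tr _ q2.1
  refine ⟨t1.1, t1.2.trans (q1.2.trans htr), t2.1, ?_⟩
  refine t2.2.trans_le (q2.2.trans_le ?_)
  rw [htr, hs1, hs2]
  linarith


theorem est_cond {d q l : ℕ} (hl : 0 < l) {A : Matrix (Fin d) (Fin d) ℝ} (hA : A.PosSemidef)
    (Q S : Fin d → Fin q → ℝ) (hQ : (Matrix.of Q)ᵀ * Matrix.of Q = 1)
    (h : LinearMap.range (A * Matrix.of S).mulVecLin ≤ LinearMap.range (Matrix.of Q).mulVecLin) :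
    Integrable (fun g => (hutchppEst A Q g - A.trace)) (radMeasure d l) ∧
    ∫ g, (hutchppEst A Q g - A.trace) ∂(radMeasure d l) = 0 ∧
    Integrable (fun g => (hutchppEst A Q g - A.trace) ^ 2) (radMeasure d l) ∧
    ∫ g, (hutchppEst A Q g - A.trace) ^ 2 ∂(radMeasure d l) ≤
      2 / l * (resid q A (fun j i => S i j) * resid q A (fun j i => S i j)).trace := by
  have : IsProbabilityMeasure (radMeasure d l) := by unfold radMeasure; infer_instance
  have hT : Aᵀ = A := by simpa [IsHermitian] using hA.1
  have pm := proj_main hA (Matrix.of Q) (Matrix.of S) hQ h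
  simp only at pm
  set P := Matrix.of Q with hP
  set N := 1 - P * Pᵀ with hNdef
  have hN : Nᵀ = N := by simp [N, transpose_sub]
  have hNP : N * P = 0 := by
    rw [hNdef, Matrix.sub_mul, Matrix.mul_assoc, hQ]; simp
  have hNN : N * N = N := by
    conv_lhs => rhs; rw [hNdef]
    rw [mul_sub, ← Matrix.mul_assoc, hNP]; simp
  set B := N * A * N with hBdef
  have hB : Bᵀ = B := by
    rw [hBdef, transpose_mul, transpose_mul, hN, hT, mul_assoc]
  have htr : (Pᵀ * A * P).trace + B.trace = A.trace := by
    have hb : B.trace = (N * A).trace := by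
      rw [hBdef, trace_mul_comm (N * A) N, ← mul_assoc, hNN]
    have hc : (P * Pᵀ * A).trace = (Pᵀ * A * P).trace := by
      rw [Matrix.mul_assoc, trace_mul_comm P]
    rw [hb, hNdef, sub_mul, trace_sub, one_mul, hc]
    ring
  have hX : ∀ g : Fin d → Fin l → ℝ, hutchppEst A Q g - A.trace =
      (1 / (l : ℝ)) * ((Matrix.of g)ᵀ * B * Matrix.of g).trace - B.trace := by
    intro g
    rw [hutchppEst, ← hP, ← hNdef, ← htr, hBdef]
    simp only [Matrix.mul_assoc]
    ring
  obtain ⟨i1, e1, i2, e2⟩ := rad_quad (l := l) hB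
  have hl' : (0 : ℝ) < l := by exact_mod_cast hl
  have hX2 : ∀ g : Fin d → Fin l → ℝ, (hutchppEst A Q g - A.trace) ^ 2 =
      (1 / (l : ℝ)) ^ 2 * ((Matrix.of g)ᵀ * B * Matrix.of g).trace ^ 2
      - (2 * B.trace / l) * ((Matrix.of g)ᵀ * B * Matrix.of g).trace + B.trace ^ 2 := by
    intro g; rw [hX]; ring
  refine ⟨?_, ?_, ?_, ?_⟩
  · simp only [hX]
    exact (i1.const_mul _).sub (integrable_const _)
  · simp only [hX]
    rw [integral_sub (i1.const_mul _) (integrable_const _), integral_const_mul, e1]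
    simp
    field_simp
    ring
  · simp only [hX2]
    exact ((i2.const_mul _).sub (i1.const_mul _)).add (integrable_const _)
  · simp only [hX2]
    have i3 : Integrable (fun g : Fin d → Fin l → ℝ =>
        (1 / (l : ℝ)) ^ 2 * ((Matrix.of g)ᵀ * B * Matrix.of g).trace ^ 2
        - (2 * B.trace / l) * ((Matrix.of g)ᵀ * B * Matrix.of g).trace) (radMeasure d l) :=
      (i2.const_mul _).sub (i1.const_mul _)
    rw [integral_add i3 (integrable_const _),
      integral_sub (i2.const_mul _) (i1.const_mul _), integral_const_mul, integral_const_mul, e1]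
    have k1 := mul_le_mul_of_nonneg_left e2 (sq_nonneg (1 / (l : ℝ)))
    have k2 := mul_le_mul_of_nonneg_left pm (by positivity : 0 ≤ 2 / (l : ℝ))
    have k3 : (1 / (l : ℝ)) ^ 2 * ((l * B.trace) ^ 2 + 2 * l * (B * B).trace)
        - 2 * B.trace / l * (l * B.trace) + B.trace ^ 2 = 2 / l * (B * B).trace := by
      field_simp
      ring
    simp only [integral_const, probReal_univ, smul_eq_mul, one_mul]
    refine le_trans ?_ k2
    linarith

theorem est_meas {d q l : ℕ} (A : Matrix (Fin d) (Fin d) ℝ)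
    (Q : (Fin d → Fin q → ℝ) → (Fin d → Fin q → ℝ)) (hQ : Measurable Q) :
    Measurable fun ω : (Fin d → Fin q → ℝ) × (Fin d → Fin l → ℝ) => hutchppEst A (Q ω.1) ω.2 := by
  have h1 : ∀ i j, Measurable fun ω : (Fin d → Fin q → ℝ) × (Fin d → Fin l → ℝ) => Q ω.1 i j := by
    intro i j; fun_prop
  have h2 : ∀ i j, Measurable fun ω : (Fin d → Fin q → ℝ) × (Fin d → Fin l → ℝ) => ω.2 i j := by
    intro i j; fun_prop
  simp only [hutchppEst, trace, diag, mul_apply, transpose_apply, of_apply, Matrix.sub_apply]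
  refine Measurable.add ?_ (Measurable.const_mul ?_ _)
  · exact Finset.measurable_fun_sum _ fun i _ => Finset.measurable_fun_sum _ fun j _ =>
      (Finset.measurable_fun_sum _ fun k _ => (h1 _ _).mul_const _).mul (h1 _ _)
  · have hN : ∀ i j, Measurable fun ω : (Fin d → Fin q → ℝ) × (Fin d → Fin l → ℝ) =>
        (1 : Matrix (Fin d) (Fin d) ℝ) i j - ∑ k, Q ω.1 i k * Q ω.1 j k := fun i j =>
      measurable_const.sub (Finset.measurable_fun_sum _ fun k _ => (h1 _ _).mul (h1 _ _))
    exact Finset.measurable_fun_sum _ fun i _ => Finset.measurable_fun_sum _ fun j _ =>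
      (Finset.measurable_fun_sum _ fun k _ => (Finset.measurable_fun_sum _ fun k _ =>
      (Finset.measurable_fun_sum _ fun k _ => (h2 _ _).mul (hN _ _)).mul_const _).mul
        (hN _ _)).mul (h2 _ _)

theorem stmt9 (m d q ℓ : ℕ) (hm : 18 ≤ m) (hmod : m % 8 = 2)
    (hq : 4 * q = m + 2) (hl : 2 * ℓ = m - 2)
    (A : Matrix (Fin d) (Fin d) ℝ) (hA : A.PosSemidef)
    (Q : (Fin d → Fin q → ℝ) → (Fin d → Fin q → ℝ))
    (hQmeas : Measurable Q)
    (hQorth : ∀ s, (Matrix.of (Q s))ᵀ * Matrix.of (Q s) = 1)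
    (hQspan : ∀ s, LinearMap.range (A * Matrix.of s).mulVecLin ≤
      LinearMap.range (Matrix.of (Q s)).mulVecLin) :
    (∫ ω, hutchppEst A (Q ω.1) ω.2 ∂((gaussMeasure d q).prod (radMeasure d ℓ))) = A.trace ∧
    ProbabilityTheory.variance (fun ω => hutchppEst A (Q ω.1) ω.2)
        ((gaussMeasure d q).prod (radMeasure d ℓ)) ≤
      (16 / ((m : ℝ) - 2) ^ 2) * A.trace ^ 2 := by
  have : IsProbabilityMeasure (radMeasure d ℓ) := by unfold radMeasure; infer_instance
  have : IsProbabilityMeasure (gaussMeasure d q) := by unfold gaussMeasure; infer_instance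
  have hl0 : 0 < ℓ := by omega
  have hX := est_meas (l := ℓ) A Q hQmeas
  have hc := fun s => est_cond hl0 hA (Q s) s (hQorth s) (hQspan s)
  have hY : Measurable fun ω : (Fin d → Fin q → ℝ) × (Fin d → Fin ℓ → ℝ) =>
      hutchppEst A (Q ω.1) ω.2 - A.trace := hX.sub_const _
  have mp := mp_swap (ι := Fin d) (κ := Fin q) (ProbabilityTheory.gaussianReal 0 1)
  have hrm : Measurable fun s : Fin q → Fin d → ℝ => (resid q A s * resid q A s).trace :=
    frob_meas (resid_meas q (fun i j => measurable_const) measurable_id)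
  have hri : Integrable (fun s : Fin d → Fin q → ℝ =>
      (resid q A (fun j i => s i j) * resid q A (fun j i => s i j)).trace) (gaussMeasure d q) := by
    refine Integrable.of_bound (hrm.comp mp.measurable).aestronglyMeasurable (A * A).trace
      (ae_of_all _ fun s => ?_)
    have h := resid_psd q hA (fun j i => s i j)
    rw [Real.norm_of_nonneg (frob_nonneg h.1)]
    exact h.2
  have hrb : ∫ s, (resid q A (fun j i => s i j) * resid q A (fun j i => s i j)).trace
      ∂(gaussMeasure d q) ≤ A.trace ^ 2 / ((q : ℝ) - 1) := by
    refine le_trans (le_of_eq ?_) (resid_bound (by omega : 5 ≤ q) hA)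
    rw [← mp.map_eq, integral_map mp.aemeasurable hrm.aestronglyMeasurable]
    rfl
  have hI2 : Integrable (fun ω : (Fin d → Fin q → ℝ) × (Fin d → Fin ℓ → ℝ) =>
      (hutchppEst A (Q ω.1) ω.2 - A.trace) ^ 2) ((gaussMeasure d q).prod (radMeasure d ℓ)) := by
    have ms := (hY.pow_const 2).aestronglyMeasurable
      (μ := (gaussMeasure d q).prod (radMeasure d ℓ))
    rw [integrable_prod_iff ms]
    refine ⟨ae_of_all _ fun s => (hc s).2.2.1, ?_⟩
    refine Integrable.mono' (hri.const_mul (2 / (ℓ : ℝ))) ms.norm.integral_prod_right'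
      (ae_of_all _ fun s => ?_)
    rw [Real.norm_of_nonneg (integral_nonneg fun g => norm_nonneg _)]
    simp only [Real.norm_of_nonneg (sq_nonneg _)]
    exact (hc s).2.2.2
  have hI1 : Integrable (fun ω : (Fin d → Fin q → ℝ) × (Fin d → Fin ℓ → ℝ) =>
      hutchppEst A (Q ω.1) ω.2 - A.trace) ((gaussMeasure d q).prod (radMeasure d ℓ)) :=
    ((memLp_two_iff_integrable_sq hY.aestronglyMeasurable).2 hI2).integrable (by norm_num)
  have hE0 : ∫ ω, (hutchppEst A (Q ω.1) ω.2 - A.trace)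
      ∂((gaussMeasure d q).prod (radMeasure d ℓ)) = 0 := by
    rw [integral_prod _ hI1]
    simp only [(hc _).2.1, integral_zero]
  have hE : (∫ ω, hutchppEst A (Q ω.1) ω.2
      ∂((gaussMeasure d q).prod (radMeasure d ℓ))) = A.trace := by
    have hI : Integrable (fun ω : (Fin d → Fin q → ℝ) × (Fin d → Fin ℓ → ℝ) =>
        hutchppEst A (Q ω.1) ω.2) ((gaussMeasure d q).prod (radMeasure d ℓ)) := by
      have := hI1.add (integrable_const A.trace)
      refine this.congr (ae_of_all _ fun ω => by simp)
    rw [integral_sub hI (integrable_const _)] at hE0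
    simp only [integral_const, probReal_univ, smul_eq_mul, one_mul] at hE0
    linarith
  refine ⟨hE, ?_⟩
  rw [ProbabilityTheory.variance_eq_integral hX.aemeasurable, hE, integral_prod _ hI2]
  have hb : ∫ s, ∫ g, (hutchppEst A (Q s) g - A.trace) ^ 2 ∂(radMeasure d ℓ) ∂(gaussMeasure d q)
      ≤ 2 / (ℓ : ℝ) * (A.trace ^ 2 / ((q : ℝ) - 1)) := by
    refine le_trans (integral_mono_of_nonneg (ae_of_all _ fun s => integral_nonneg fun g =>
      sq_nonneg _) (hri.const_mul (2 / (ℓ : ℝ))) (ae_of_all _ fun s => (hc s).2.2.2)) ?_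
    rw [integral_const_mul]
    exact mul_le_mul_of_nonneg_left hrb (by positivity)
  refine hb.trans (le_of_eq ?_)
  have hmr : (18 : ℝ) ≤ m := by exact_mod_cast hm
  have e1 : (q : ℝ) = ((m : ℝ) + 2) / 4 := by
    have : (4 : ℝ) * q = m + 2 := by exact_mod_cast hq
    linarith
  have e2 : (ℓ : ℝ) = ((m : ℝ) - 2) / 2 := by
    have h : 2 * ℓ + 2 = m := by omega
    have : (2 : ℝ) * ℓ + 2 = m := by exact_mod_cast h
    linarith
  have e3 : (q : ℝ) - 1 = ((m : ℝ) - 2) / 4 := by rw [e1]; ring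
  rw [e3, e2]
  have : (m : ℝ) - 2 ≠ 0 := by linarith
  field_simp
  ring
end
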